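/- Let 2 ≤ r < m and g ≥ 3 be integers. If there exists a finite planar ({r,m};g)-graph, then r(2−g) + 2g > 0; equivalently, the triplet ({r,m};g) satisfies one of: g = 3 and 2 ≤ r ≤ 5; g = 4 and 2 ≤ r ≤ 3; g = 5 and 2 ≤ r ≤ 3; or g ≥ 6 and r = 2. -/

import Mathlib

open SimpleGraph

/-- `H` is a minor of `G`: there is an assignment of pairwise disjoint connected
branch sets in `G` to the vertices of `H`, with an edge of `G` between the branch
sets of any two adjacent vertices of `H`. -/
def SimpleGraph.IsMinorOf {W V : Type*} (H : SimpleGraph W) (G : SimpleGraph V) : Prop :=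
  ∃ f : W → Set V,
    (∀ w, (G.induce (f w)).Connected) ∧
    (Pairwise fun w₁ w₂ => Disjoint (f w₁) (f w₂)) ∧
    ∀ ⦃w₁ w₂⦄, H.Adj w₁ w₂ → ∃ v₁ ∈ f w₁, ∃ v₂ ∈ f w₂, G.Adj v₁ v₂

/-- A graph is planar iff it has no `K₅` minor and no `K₃,₃` minor (Wagner's theorem). -/
def SimpleGraph.IsPlanar {V : Type*} (G : SimpleGraph V) : Prop :=
  ¬ (completeGraph (Fin 5)).IsMinorOf G ∧
    ¬ (completeBipartiteGraph (Fin 3) (Fin 3)).IsMinorOf G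

/-- A graph is outerplanar iff it has no `K₄` minor and no `K₂,₃` minor. -/
def SimpleGraph.IsOuterplanar {V : Type*} (G : SimpleGraph V) : Prop :=
  ¬ (completeGraph (Fin 4)).IsMinorOf G ∧
    ¬ (completeBipartiteGraph (Fin 2) (Fin 3)).IsMinorOf G

/-- The degree of a vertex, as the cardinality of its neighbour set. -/
noncomputable def SimpleGraph.degN {V : Type*} (G : SimpleGraph V) (v : V) : ℕ :=
  (G.neighborSet v).ncard

/-- An `({r,m};g)`-graph: girth `g`, every vertex has degree `r` or `m`, both occur. -/
def IsBigirthGraph {V : Type*} (G : SimpleGraph V) (r m g : ℕ) : Prop :=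
  G.girth = g ∧ (∀ v, G.degN v = r ∨ G.degN v = m) ∧
    (∃ v, G.degN v = r) ∧ (∃ v, G.degN v = m)

/-- The set of orders of finite planar `({r,m};g)`-graphs. -/
def bicageOrders (r m g : ℕ) : Set ℕ :=
  {n | ∃ (V : Type) (_ : Fintype V) (G : SimpleGraph V),
    G.IsPlanar ∧ IsBigirthGraph G r m g ∧ Fintype.card V = n}

/-!
The heart of the matter is a weighted Euler inequality, which needs no embedding of the graph. Let a
planar multigraph on the vertex set `S` have a nonempty even edge set (a nonzero element of the
mod-2 cycle space), and let its edges carry nonnegative weights `w` such that every nonempty even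
edge set has weight at least one. Then `#E + 2 ≤ #S + 2 * ∑ e ∈ E, w e`. In a minimal
counterexample every weight lies strictly between `0` and `1 / 2`: an edge of weight zero could be
contracted, and an edge of weight at least `1 / 2` deleted. Call an even set tight if its weight is
exactly one. The tight sets are then peripheral cycles, and three peripheral cycles through a common
edge would produce a `K₅` or `K₃,₃` minor; hence every edge lies in at most two tight sets, and
since these have at least three edges each, there are fewer tight sets than edges. So the weights
can be moved, without increasing their sum, in a direction preserving the weight of every tight set,
until a further even set becomes tight; this cannot go on forever.

With all weights equal to `1 / girth`, the inequality bounds the number of edges of a planar graph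
of given girth, and the bound is compared with the degree sum.
-/

namespace PlanarGirth

open Finset
open scoped Classical

section Connectivity

variable {V : Type*} {H : SimpleGraph V}

theorem induce_connected_iff_exists_adj {T : Set V} :
    (H.induce T).Connected ↔
      T.Nonempty ∧ ∀ A ⊆ T, A.Nonempty → A ≠ T → ∃ p ∈ A, ∃ q ∈ T \ A, H.Adj p q := by
  constructor
  · intro h
    refine ⟨Set.nonempty_coe_sort.1 h.nonempty, fun A hA ⟨a, ha⟩ hne => ?_⟩
    obtain ⟨b, hb, hbA⟩ := Set.exists_of_ssubset (hA.ssubset_of_ne hne)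
    obtain ⟨walk⟩ := h ⟨a, hA ha⟩ ⟨b, hb⟩
    obtain ⟨d, -, hd, hd'⟩ := walk.exists_boundary_dart (Subtype.val ⁻¹' A) ha hbA
    exact ⟨d.fst, hd, d.snd, ⟨d.snd.2, hd'⟩, d.adj⟩
  · rintro ⟨⟨t, ht⟩, hcut⟩
    refine connected_iff_exists_forall_reachable _ |>.2 ⟨⟨t, ht⟩, fun v => ?_⟩
    by_contra hv
    obtain ⟨p, ⟨hp, hreach⟩, q, ⟨hq, hq'⟩, hpq⟩ :=
      hcut {x | ∃ h : x ∈ T, (H.induce T).Reachable ⟨t, ht⟩ ⟨x, h⟩} (fun _ h => h.1)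
        ⟨t, ht, .rfl⟩ fun h => hv (h.ge v.2).2
    exact hq' ⟨hq, hreach.trans (Adj.reachable (by simpa using hpq))⟩

/-- The vertex set `T` is nonempty and induces a connected subgraph of `H`. -/
def IsConnectedOn (H : SimpleGraph V) (T : Finset V) : Prop :=
  (H.induce (T : Set V)).Connected

/-- Some edge of `H` has one end in `X` and the other in `Y`. -/
def Touches (H : SimpleGraph V) (X Y : Finset V) : Prop :=
  ∃ p ∈ X, ∃ q ∈ Y, H.Adj p q

/-- `K` is the vertex set of a connected component of the subgraph of `H` induced by `Z`. -/
structure IsComponentIn (H : SimpleGraph V) (Z K : Finset V) : Prop where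
  subset : K ⊆ Z
  connected : IsConnectedOn H K
  mem_of_adj : ∀ p ∈ K, ∀ q ∈ Z, H.Adj p q → q ∈ K

variable {A X Y X' Y' Z K L T : Finset V} {x y : V}

theorem Touches.symm (h : Touches H X Y) : Touches H Y X :=
  let ⟨p, hp, q, hq, hpq⟩ := h; ⟨q, hq, p, hp, hpq.symm⟩

theorem Touches.mono (h : Touches H X Y) (hX : X ⊆ X') (hY : Y ⊆ Y') : Touches H X' Y' :=
  let ⟨p, hp, q, hq, hpq⟩ := h; ⟨p, hX hp, q, hY hq, hpq⟩

theorem isConnectedOn_iff :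
    IsConnectedOn H T ↔ T.Nonempty ∧ ∀ A ⊆ T, A.Nonempty → A ≠ T → Touches H A (T \ A) := by
  refine induce_connected_iff_exists_adj.trans (and_congr Iff.rfl ⟨fun h A hA hne hT => ?_,
    fun h A hA hne hT => ?_⟩)
  · simpa [Touches] using h A (mod_cast hA) (mod_cast hne) (mod_cast hT)
  · lift A to Finset V using T.finite_toSet.subset hA
    simpa [Touches] using h A (mod_cast hA) (mod_cast hne) (mod_cast hT)

theorem IsConnectedOn.nonempty (h : IsConnectedOn H T) : T.Nonempty :=
  (isConnectedOn_iff.1 h).1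

theorem IsConnectedOn.touches_sdiff (h : IsConnectedOn H T) (hA : A ⊆ T) (hne : A.Nonempty)
    (hT : A ≠ T) : Touches H A (T \ A) :=
  (isConnectedOn_iff.1 h).2 A hA hne hT

theorem IsConnectedOn.exists_adj (hX : IsConnectedOn H X) (hx : x ∈ X) (hy : y ∈ X)
    (hxy : x ≠ y) : ∃ q ∈ X, H.Adj x q := by
  obtain ⟨p, hp, q, hq, hpq⟩ := hX.touches_sdiff (singleton_subset_iff.2 hx)
    (singleton_nonempty x) fun h => hxy (mem_singleton.1 (h ▸ hy)).symm
  exact ⟨q, (mem_sdiff.1 hq).1, mem_singleton.1 hp ▸ hpq⟩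

theorem isConnectedOn_singleton (v : V) : IsConnectedOn H {v} := by
  refine isConnectedOn_iff.2 ⟨singleton_nonempty v, fun A hA hne hT => ?_⟩
  exact absurd (hne.subset_singleton_iff.1 hA) hT

theorem IsConnectedOn.union (hX : IsConnectedOn H X) (hY : IsConnectedOn H Y)
    (h : Touches H X Y) : IsConnectedOn H (X ∪ Y) := by
  obtain ⟨p, hp, q, hq, hpq⟩ := h
  rw [IsConnectedOn, coe_union]
  exact connected_induce_union hX.preconnected hY.preconnected hp hq hpq

theorem IsConnectedOn.insert {q : V} (hX : IsConnectedOn H X) (h : Touches H X {q}) :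
    IsConnectedOn H (insert q X) := by
  rw [insert_eq, union_comm]
  exact hX.union (isConnectedOn_singleton q) h

theorem exists_isComponentIn_mem {b : V} (hb : b ∈ Z) : ∃ K, IsComponentIn H Z K ∧ b ∈ K := by
  obtain ⟨K, hK⟩ := {K ∈ Z.powerset | IsConnectedOn H K ∧ b ∈ K}.exists_maximal
    ⟨{b}, by simp [hb, isConnectedOn_singleton]⟩
  simp only [maximal_iff, mem_filter, mem_powerset] at hK
  obtain ⟨⟨hKZ, hKc, hbK⟩, hmax⟩ := hK
  refine ⟨K, ⟨hKZ, hKc, fun p hp q hq hpq => ?_⟩, hbK⟩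
  rw [hmax ⟨insert_subset hq hKZ, hKc.insert ⟨p, hp, q, mem_singleton_self q, hpq⟩,
    mem_insert_of_mem hbK⟩ (subset_insert q K)]
  exact mem_insert_self q K

theorem IsComponentIn.subset_of_mem (hL : IsComponentIn H Z L) (hK : IsConnectedOn H K)
    (hKZ : K ⊆ Z) {c : V} (hcK : c ∈ K) (hcL : c ∈ L) : K ⊆ L := by
  by_contra hn
  obtain ⟨p, hp, q, hq, hpq⟩ := hK.touches_sdiff inter_subset_left ⟨c, mem_inter.2 ⟨hcK, hcL⟩⟩
    fun h => hn (inter_eq_left.1 h)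
  have := hL.mem_of_adj p (mem_inter.1 hp).2 q (hKZ (mem_sdiff.1 hq).1) hpq
  grind

theorem IsComponentIn.eq_of_mem (hK : IsComponentIn H Z K) (hL : IsComponentIn H Z L) {c : V}
    (hcK : c ∈ K) (hcL : c ∈ L) : K = L :=
  (hL.subset_of_mem hK.connected hK.subset hcK hcL).antisymm
    (hK.subset_of_mem hL.connected hL.subset hcL hcK)

theorem IsComponentIn.touches_sdiff (hK : IsComponentIn H Z K) (hZ : Z ⊆ T)
    (hT : IsConnectedOn H T) (hKT : K ≠ T) : Touches H K (T \ Z) := by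
  obtain ⟨p, hp, q, hq, hpq⟩ := hT.touches_sdiff (hK.subset.trans hZ) hK.connected.nonempty hKT
  rw [mem_sdiff] at hq
  exact ⟨p, hp, q, mem_sdiff.2 ⟨hq.1, fun h => hq.2 (hK.mem_of_adj p hp q h hpq)⟩, hpq⟩

end Connectivity

section Minors

variable {V W ι κ : Type*} {K : SimpleGraph W} {H H' : SimpleGraph V}

theorem isMinorOf_mono (h : H ≤ H') (hK : K.IsMinorOf H) : K.IsMinorOf H' := by
  obtain ⟨f, hconn, hdisj, hadj⟩ := hK
  refine ⟨f, fun w => (hconn w).mono (comap_monotone _ h), hdisj, fun w w' hw => ?_⟩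
  obtain ⟨p, hp, q, hq, hpq⟩ := hadj hw
  exact ⟨p, hp, q, hq, h hpq⟩

theorem isPlanar_anti (h : H ≤ H') (hH' : H'.IsPlanar) : H.IsPlanar :=
  hH'.imp (mt (isMinorOf_mono h)) (mt (isMinorOf_mono h))

theorem completeBipartiteGraph_isMinorOf {A : ι → Finset V} {B : κ → Finset V}
    (hA : ∀ i, IsConnectedOn H (A i)) (hB : ∀ j, IsConnectedOn H (B j))
    (hAA : Pairwise fun i j => Disjoint (A i) (A j))
    (hBB : Pairwise fun i j => Disjoint (B i) (B j)) (hAB : ∀ i j, Disjoint (A i) (B j))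
    (hadj : ∀ i j, Touches H (A i) (B j)) : (completeBipartiteGraph ι κ).IsMinorOf H := by
  refine ⟨Sum.elim (A ·) (B ·), Sum.rec hA hB, ?_, ?_⟩
  · rintro (i | i) (j | j) hij
    · exact disjoint_coe.2 (hAA (by simpa using hij))
    · exact disjoint_coe.2 (hAB i j)
    · exact disjoint_coe.2 (hAB j i).symm
    · exact disjoint_coe.2 (hBB (by simpa using hij))
  · rintro (i | i) (j | j) hij
    · simp at hij
    · exact hadj i j
    · exact (hadj j i).symm
    · simp at hij

theorem completeGraph_isMinorOf {A : ι → Finset V} (hA : ∀ i, IsConnectedOn H (A i))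
    (hdisj : Pairwise fun i j => Disjoint (A i) (A j))
    (hadj : Pairwise fun i j => Touches H (A i) (A j)) : (completeGraph ι).IsMinorOf H :=
  ⟨(A ·), hA, fun _ _ hij => disjoint_coe.2 (hdisj hij), fun _ _ hij => hadj hij⟩

theorem induce_preimage_connected {V' : Type*} {H' : SimpleGraph V'} {c : V → V'}
    (hfib : ∀ v, (H.induce (c ⁻¹' {v})).Preconnected)
    (hadj : ∀ ⦃p q⦄, H'.Adj p q → ∃ p' q', c p' = p ∧ c q' = q ∧ H.Adj p' q') {T : Set V'}
    (hT : (H'.induce T).Connected) (hne : (c ⁻¹' T).Nonempty) :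
    (H.induce (c ⁻¹' T)).Connected := by
  refine induce_connected_iff_exists_adj.2 ⟨hne, fun A hA hAne hAT => ?_⟩
  by_contra! hcut
  have fibre_subset : ∀ a ∈ A, c ⁻¹' {c a} ⊆ A := by
    intro a ha b hb
    by_contra hbA
    have hconn := connected_iff _ |>.2 ⟨hfib (c a), ⟨⟨a, rfl⟩⟩⟩
    obtain ⟨p, hp, q, hq, hpq⟩ := (induce_connected_iff_exists_adj.1 hconn).2
      (A ∩ c ⁻¹' {c a}) Set.inter_subset_right ⟨a, ha, rfl⟩ fun h => hbA (h.ge hb).1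
    have hqT : q ∈ c ⁻¹' T := by
      rw [Set.mem_preimage, show c q = c a from hq.1]
      exact hA ha
    exact hcut p hp.1 q ⟨hqT, fun h => hq.2 ⟨h, hq.1⟩⟩ hpq
  obtain ⟨_, ⟨a, ha, rfl⟩, q, hq, hpq⟩ := (induce_connected_iff_exists_adj.1 hT).2 (c '' A)
    (Set.image_subset_iff.2 hA) (hAne.image c) fun h => hAT (hA.antisymm fun x hx => by
      obtain ⟨a, ha, hax⟩ := h.ge hx
      exact fibre_subset a ha hax.symm)
  obtain ⟨p', q', hp', rfl, hpq'⟩ := hadj hpq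
  exact hcut p' (fibre_subset a ha hp') q' ⟨hq.1, fun h => hq.2 ⟨q', h, rfl⟩⟩ hpq'

theorem isMinorOf_of_contraction {V' : Type*} {H' : SimpleGraph V'} {c : V → V'}
    (hfib : ∀ v, (H.induce (c ⁻¹' {v})).Preconnected)
    (hadj : ∀ ⦃p q⦄, H'.Adj p q → ∃ p' q', c p' = p ∧ c q' = q ∧ H.Adj p' q')
    (hK : ∀ w, ∃ w', K.Adj w w') (h : K.IsMinorOf H') : K.IsMinorOf H := by
  obtain ⟨f, hconn, hdisj, hf⟩ := h
  refine ⟨fun w => c ⁻¹' f w, fun w => ?_, fun w w' hw => (hdisj hw).preimage c,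
    fun w w' hw => ?_⟩
  · obtain ⟨w', hw⟩ := hK w
    obtain ⟨p, hp, q, -, hpq⟩ := hf hw
    obtain ⟨p', -, rfl, -⟩ := hadj hpq
    exact induce_preimage_connected hfib hadj (hconn w) ⟨p', hp⟩
  · obtain ⟨p, hp, q, hq, hpq⟩ := hf hw
    obtain ⟨p', q', rfl, rfl, hpq'⟩ := hadj hpq
    exact ⟨p', hp, q', hq, hpq'⟩

theorem isPlanar_of_contraction {V' : Type*} {H' : SimpleGraph V'} {c : V → V'}
    (hfib : ∀ v, (H.induce (c ⁻¹' {v})).Preconnected)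
    (hadj : ∀ ⦃p q⦄, H'.Adj p q → ∃ p' q', c p' = p ∧ c q' = q ∧ H.Adj p' q')
    (h : H.IsPlanar) : H'.IsPlanar := by
  have h5 (w : Fin 5) : ∃ w', (completeGraph (Fin 5)).Adj w w' :=
    (exists_ne w).imp fun _ => Ne.symm
  have h33 : ∀ w, ∃ w', (completeBipartiteGraph (Fin 3) (Fin 3)).Adj w w' :=
    Sum.rec (fun _ => ⟨.inr 0, by simp⟩) fun _ => ⟨.inl 0, by simp⟩
  exact h.imp (mt (isMinorOf_of_contraction hfib hadj h5))
    (mt (isMinorOf_of_contraction hfib hadj h33))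

end Minors

section Cuts

variable {V : Type*} {H : SimpleGraph V} {T X Y Z : Finset V}

theorem card_interedges_comm (X Y : Finset V) : #(H.interedges X Y) = #(H.interedges Y X) :=
  have : Std.Symm H.Adj := ⟨fun _ _ => Adj.symm⟩
  Rel.card_interedges_comm X Y

theorem card_interedges_union_right (X : Finset V) (h : Disjoint Y Z) :
    #(H.interedges X (Y ∪ Z)) = #(H.interedges X Y) + #(H.interedges X Z) := by
  rw [← card_union_of_disjoint (interedges_disjoint_right H X h)]
  congr 1
  ext ⟨p, q⟩
  simp only [mk_mem_interedges_iff, mem_union]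
  tauto

theorem card_interedges_eq_sum (X Y : Finset V) :
    #(H.interedges X Y) = ∑ v ∈ X, #{u ∈ Y | H.Adj v u} := by
  simp only [interedges_def, card_filter, sum_product]

theorem touches_iff_card_interedges_pos : Touches H X Y ↔ 0 < #(H.interedges X Y) := by
  simp only [card_pos, Finset.Nonempty, Prod.exists, mk_mem_interedges_iff, Touches]
  grind

theorem card_interedges_self (T : Finset V) :
    #(H.interedges T T) = 2 * Nat.card (H.induce (T : Set V)).edgeSet := by
  rw [Nat.card_eq_fintype_card, ← edgeFinset_card, two_mul_card_edgeFinset]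
  refine (card_nbij (fun x => (x.1.1, x.2.1)) ?_ ?_ ?_).symm
  · rintro ⟨⟨p, hp⟩, ⟨q, hq⟩⟩ h
    simpa [mk_mem_interedges_iff, mem_coe.1 hp, mem_coe.1 hq] using h
  · rintro ⟨⟨p, hp⟩, ⟨q, hq⟩⟩ - ⟨⟨p', hp'⟩, ⟨q', hq'⟩⟩ - h
    simpa using h
  · rintro ⟨p, q⟩ h
    obtain ⟨hp, hq, hpq⟩ := (H.mk_mem_interedges_iff).1 (mem_coe.1 h)
    exact ⟨(⟨p, hp⟩, ⟨q, hq⟩), by simpa using hpq, rfl⟩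

theorem IsConnectedOn.two_mul_card_le (hT : IsConnectedOn H T) :
    2 * #T ≤ #(H.interedges T T) + 2 := by
  have := Connected.card_vert_le_card_edgeSet_add_one hT
  rw [card_interedges_self]
  simp only [coe_sort_coe, Nat.card_eq_fintype_card, Fintype.card_coe] at this ⊢
  lia

end Cuts

section Cycles

variable {V : Type*} {H : SimpleGraph V} {D E L T X : Finset V} {q v z : V}

/-- The subgraph of `H` induced by `D` is a cycle. -/
structure IsCycleOn (H : SimpleGraph V) (D : Finset V) : Prop where
  connected : IsConnectedOn H D
  card_neighbors : ∀ v ∈ D, #{u ∈ D | H.Adj v u} = 2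

theorem IsCycleOn.card_interedges (hD : IsCycleOn H D) (hT : T ⊆ D) :
    #(H.interedges T D) = 2 * #T := by
  rw [card_interedges_eq_sum, sum_congr rfl fun v hv => hD.card_neighbors v (hT hv), sum_const,
    smul_eq_mul, mul_comm]

theorem IsCycleOn.card_interedges_self_add (hD : IsCycleOn H D) (hT : T ⊆ D) :
    #(H.interedges T T) + #(H.interedges T (D \ T)) = 2 * #T := by
  rw [← hD.card_interedges hT, ← card_interedges_union_right T disjoint_sdiff,
    union_sdiff_of_subset hT]

theorem IsCycleOn.two_le_cut (hD : IsCycleOn H D) (hT : T ⊆ D) (hne : T.Nonempty)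
    (hTD : T ≠ D) : 2 ≤ #(H.interedges T (D \ T)) := by
  have hpos := touches_iff_card_interedges_pos.1 (hD.connected.touches_sdiff hT hne hTD)
  have hsum := hD.card_interedges_self_add hT
  rw [card_interedges_self] at hsum
  lia

theorem IsCycleOn.cut_le_two (hD : IsCycleOn H D) (hT : T ⊆ D) (hconn : IsConnectedOn H T) :
    #(H.interedges T (D \ T)) ≤ 2 := by
  have := hD.card_interedges_self_add hT
  have := hconn.two_mul_card_le
  lia

theorem IsCycleOn.connected_sdiff (hD : IsCycleOn H D) (hT : T ⊆ D)
    (hconn : IsConnectedOn H T) (hTD : T ≠ D) : IsConnectedOn H (D \ T) := by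
  refine isConnectedOn_iff.2 ⟨sdiff_nonempty.2 fun h => hTD (hT.antisymm h), fun A hA hne hAT => ?_⟩
  obtain ⟨t, ht⟩ := hconn.nonempty
  set B := (D \ T) \ A
  have hBne : B.Nonempty := sdiff_nonempty.2 fun h => hAT (hA.antisymm h)
  have hcutA := hD.two_le_cut (hA.trans sdiff_subset) hne (by grind)
  have hcutB := hD.two_le_cut (T := B) (by grind) hBne (by grind)
  have hcutT := hD.cut_le_two hT hconn
  rw [show D \ A = T ∪ B by grind, card_interedges_union_right A (by grind [Finset.disjoint_left]),
    card_interedges_comm A T] at hcutA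
  rw [show D \ B = T ∪ A by grind, card_interedges_union_right B (by grind [Finset.disjoint_left]),
    card_interedges_comm B T, card_interedges_comm B A] at hcutB
  rw [show D \ T = A ∪ B by grind, card_interedges_union_right T disjoint_sdiff] at hcutT
  exact touches_iff_card_interedges_pos.2 (by lia)

theorem IsCycleOn.connected_inter (hD : IsCycleOn H D) (hconn : IsConnectedOn H (D \ E))
    (hne : (D ∩ E).Nonempty) : IsConnectedOn H (D ∩ E) := by
  rw [← sdiff_sdiff_self_left]
  exact hD.connected_sdiff sdiff_subset hconn (by grind)

-- A vertex of both cycles has two neighbours on each, hence equally many on `D \ E` and `E \ D`.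
theorem IsCycleOn.touches_sdiff_swap (hD : IsCycleOn H D) (hE : IsCycleOn H E)
    (hXD : X ⊆ D) (hXE : X ⊆ E) (h : Touches H X (D \ E)) : Touches H X (E \ D) := by
  have hcardD := hD.card_interedges hXD
  have hcardE := hE.card_interedges hXE
  rw [← sdiff_union_inter D E, card_interedges_union_right X (disjoint_sdiff_inter _ _)]
    at hcardD
  rw [← sdiff_union_inter E D, card_interedges_union_right X (disjoint_sdiff_inter _ _),
    inter_comm E D] at hcardE
  rw [touches_iff_card_interedges_pos] at h ⊢
  lia

theorem IsCycleOn.eq_or_eq_of_adj {n : V} (hD : IsCycleOn H D) (hv : v ∈ D) (hq : q ∈ D)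
    (hz : z ∈ D) (hn : n ∈ D) (hqz : q ≠ z) (hvq : H.Adj v q) (hvz : H.Adj v z)
    (hvn : H.Adj v n) : n = q ∨ n = z := by
  have hpair : ({q, z} : Finset V) = {u ∈ D | H.Adj v u} :=
    eq_of_subset_of_card_le (by grind) (by rw [hD.card_neighbors v hv, card_pair hqz])
  have : n ∈ ({q, z} : Finset V) := by grind
  simpa using this

theorem IsCycleOn.exists_adj_ne (hD : IsCycleOn H D) (hv : v ∈ D) (q : V) :
    ∃ n ∈ D, n ≠ q ∧ H.Adj v n := by
  obtain ⟨n, hn, hnq⟩ := exists_mem_ne (s := {u ∈ D | H.Adj v u})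
    (by rw [hD.card_neighbors v hv]; exact one_lt_two) q
  exact ⟨n, (mem_filter.1 hn).1, hnq, (mem_filter.1 hn).2⟩

theorem IsCycleOn.cut_insert (hD : IsCycleOn H D) (hL : L ⊆ D) (hLc : IsConnectedOn H L)
    (hv : v ∈ D) (hvL : v ∉ L) (hLv : Touches H L {v}) (hne : insert v L ≠ D) :
    #(H.interedges {v} L) = 1 ∧ #(H.interedges L (D \ insert v L)) = 1 := by
  have hLv' := touches_iff_card_interedges_pos.1 hLv.symm
  have hsub : insert v L ⊆ D := insert_subset hv hL
  have hcut := hD.two_le_cut hsub (insert_nonempty v L) hne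
  have hcutL := hD.cut_le_two hL hLc
  have hcutv := hD.card_interedges (singleton_subset_iff.2 hv)
  have hrest : Disjoint L (D \ insert v L) := by grind [Finset.disjoint_left]
  have hvrest : Disjoint {v} (D \ insert v L) := by grind [Finset.disjoint_left]
  rw [insert_eq, card_interedges_comm, card_interedges_union_right _ (by simpa using hvL),
    ← insert_eq, card_interedges_comm _ {v}, card_interedges_comm _ L] at hcut
  rw [show D \ L = {v} ∪ (D \ insert v L) by grind, card_interedges_union_right _ hvrest,
    card_interedges_comm L] at hcutL
  rw [show D = {v} ∪ (L ∪ (D \ insert v L)) by grind,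
    card_interedges_union_right _ (by grind [Finset.disjoint_left]),
    card_interedges_union_right _ hrest, card_singleton] at hcutv
  lia

/-- `L` is what is left of the arc `D ∩ E` on the side of `q` once its vertex `v` is removed. -/
structure IsArm (H : SimpleGraph V) (D E : Finset V) (v q : V) (L : Finset V) : Prop
    extends IsComponentIn H ((D ∩ E).erase v) L where
  mem : q ∈ L
  adj : H.Adj v q
  mem_left : v ∈ D
  mem_right : v ∈ E

theorem exists_isArm (hv : v ∈ D ∩ E) (hq : q ∈ D ∩ E) (hvq : H.Adj v q) :
    ∃ L, IsArm H D E v q L :=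
  let ⟨L, hL, hqL⟩ := exists_isComponentIn_mem (H := H) (mem_erase.2 ⟨hvq.ne', hq⟩)
  ⟨L, hL, hqL, hvq, (mem_inter.1 hv).1, (mem_inter.1 hv).2⟩

theorem IsArm.cut_insert (hL : IsArm H D E v q L) (hD : IsCycleOn H D) (hne : (D \ E).Nonempty) :
    #(H.interedges {v} L) = 1 ∧ #(H.interedges L (D \ insert v L)) = 1 := by
  have hsub := hL.subset
  obtain ⟨r, hr⟩ := hne
  exact hD.cut_insert (by grind) hL.connected hL.mem_left (by grind)
    ⟨q, hL.mem, v, mem_singleton_self v, hL.adj.symm⟩ (by have := hL.mem_right; grind)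

theorem IsArm.touches_left (hL : IsArm H D E v q L) (hD : IsCycleOn H D)
    (hne : (D \ E).Nonempty) : Touches H L (D \ E) := by
  obtain ⟨p, hp, r, hr, hpr⟩ :=
    touches_iff_card_interedges_pos.2 ((hL.cut_insert hD hne).2 ▸ one_pos)
  have := hL.mem_of_adj p hp r
  exact ⟨p, hp, r, by grind, hpr⟩

theorem IsArm.touches_right (hL : IsArm H D E v q L) (hD : IsCycleOn H D) (hE : IsCycleOn H E)
    (hne : (D \ E).Nonempty) : Touches H L (E \ D) := by
  have hsub := hL.subset
  exact hD.touches_sdiff_swap hE (by grind) (by grind) (hL.touches_left hD hne)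

theorem IsArm.notMem (hL : IsArm H D E v q L) (hD : IsCycleOn H D) (hne : (D \ E).Nonempty)
    (hvz : H.Adj v z) (hqz : q ≠ z) : z ∉ L := by
  intro hz
  obtain ⟨x, hx⟩ := card_eq_one.1 (hL.cut_insert hD hne).1
  have hq' : (v, q) ∈ H.interedges {v} L := by simp [mk_mem_interedges_iff, hL.mem, hL.adj]
  have hz' : (v, z) ∈ H.interedges {v} L := by simp [mk_mem_interedges_iff, hz, hvz]
  rw [hx, mem_singleton] at hq' hz'
  exact hqz (Prod.ext_iff.1 (hq'.trans hz'.symm)).2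

end Cycles

section PeripheralCycles

variable {V : Type*} {H : SimpleGraph V} {S D D₁ D₂ D₃ E K R X Y Z : Finset V} {x y : V}

/-- `D` is a peripheral cycle of the subgraph of `H` induced by `S`, that is, an induced cycle
whose removal leaves a connected graph. -/
structure IsPeripheralCycle (H : SimpleGraph V) (S D : Finset V) : Prop
    extends IsCycleOn H D where
  subset : D ⊆ S
  connected_sdiff : IsConnectedOn H (S \ D)

theorem pairwise_vecCons {α : Type*} {r : α → α → Prop} (hr : ∀ a b, r a b → r b a) {n : ℕ}
    {a : α} {f : Fin n → α} (ha : ∀ i, r a (f i)) (hf : Pairwise fun i j => r (f i) (f j)) :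
    Pairwise fun i j => r (Matrix.vecCons a f i) (Matrix.vecCons a f j) :=
  pairwise_fin_succ_iff.2 ⟨fun i => hr _ _ (ha i), ha, hf⟩

theorem pairwise_disjoint_three (hXY : Disjoint X Y) (hXZ : Disjoint X Z) (hYZ : Disjoint Y Z) :
    Pairwise fun i j => Disjoint (![X, Y, Z] i) (![X, Y, Z] j) := by
  have hsymm : ∀ A B : Finset V, Disjoint A B → Disjoint B A := fun _ _ h => h.symm
  exact pairwise_vecCons hsymm (by simp [Fin.forall_fin_succ, hXY, hXZ])
    (pairwise_vecCons hsymm (by simp [hYZ]) Subsingleton.pairwise)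

theorem IsPeripheralCycle.touches_sdiff (hD : IsPeripheralCycle H S D)
    (hE : E ⊆ S) (hne : (E \ D).Nonempty) (hK : IsComponentIn H (S \ (D ∪ E)) K) :
    Touches H K (E \ D) := by
  obtain ⟨r, hr⟩ := hne
  have hsub := hK.subset
  refine (hK.touches_sdiff (T := S \ D) (by grind) hD.connected_sdiff ?_).mono subset_rfl
    (by grind)
  rintro rfl
  have := hsub (show r ∈ S \ D by grind)
  grind

theorem completeBipartiteGraph_isMinorOf_of_adj_of_notMem {s q z n : V}
    (h₁ : IsPeripheralCycle H S D₁) (h₂ : IsPeripheralCycle H S D₂)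
    (h₁₂ : IsConnectedOn H (D₁ \ D₂)) (h₂₁ : IsConnectedOn H (D₂ \ D₁)) (hs : s ∈ D₁ ∩ D₂)
    (hq : q ∈ D₁ ∩ D₂) (hz : z ∈ D₁ ∩ D₂) (hn : n ∈ S \ (D₁ ∪ D₂)) (hqz : q ≠ z) (hsq : H.Adj s q)
    (hsz : H.Adj s z) (hsn : H.Adj s n) :
    (completeBipartiteGraph (Fin 3) (Fin 3)).IsMinorOf H := by
  obtain ⟨K, hK, hnK⟩ := exists_isComponentIn_mem (H := H) hn
  obtain ⟨L, hL⟩ := exists_isArm hs hq hsq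
  obtain ⟨M, hM⟩ := exists_isArm hs hz hsz
  have hLM : Disjoint L M := Finset.disjoint_left.2 fun c hcL hcM =>
    hL.notMem h₁.toIsCycleOn h₁₂.nonempty hsz hqz (hL.eq_of_mem hM.toIsComponentIn hcL hcM ▸ hM.mem)
  have hKsub := hK.subset
  have hLsub := hL.subset
  have hMsub := hM.subset
  have hLs : Touches H L {s} := ⟨q, hL.mem, s, mem_singleton_self s, hsq.symm⟩
  have hMs : Touches H M {s} := ⟨z, hM.mem, s, mem_singleton_self s, hsz.symm⟩
  have hKs : Touches H K {s} := ⟨n, hnK, s, mem_singleton_self s, hsn.symm⟩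
  have hL₁ := hL.touches_left h₁.toIsCycleOn h₁₂.nonempty
  have hL₂ := hL.touches_right h₁.toIsCycleOn h₂.toIsCycleOn h₁₂.nonempty
  have hM₁ := hM.touches_left h₁.toIsCycleOn h₁₂.nonempty
  have hM₂ := hM.touches_right h₁.toIsCycleOn h₂.toIsCycleOn h₁₂.nonempty
  have hK₁ := h₂.touches_sdiff h₁.subset h₁₂.nonempty (union_comm D₁ D₂ ▸ hK)
  have hK₂ := h₁.touches_sdiff h₂.subset h₂₁.nonempty hK
  refine completeBipartiteGraph_isMinorOf (A := ![L, M, K]) (B := ![{s}, D₁ \ D₂, D₂ \ D₁])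
    ?_ ?_ ?_ ?_ ?_ ?_
  · simp [Fin.forall_fin_succ, hK.connected, hL.connected, hM.connected]
  · simp [Fin.forall_fin_succ, h₁₂, h₂₁, isConnectedOn_singleton]
  · exact pairwise_disjoint_three hLM (by grind [Finset.disjoint_left])
      (by grind [Finset.disjoint_left])
  · exact pairwise_disjoint_three (by grind [Finset.disjoint_left])
      (by grind [Finset.disjoint_left]) (by grind [Finset.disjoint_left])
  · simp only [Fin.forall_fin_succ, Matrix.cons_val_zero, Matrix.cons_val_succ, IsEmpty.forall_iff,
      and_true]
    grind [Finset.disjoint_left]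
  · simp [Fin.forall_fin_succ, *]

-- Otherwise the component of `x` in `D₁ ∩ D₂ ∩ D₃` has a vertex adjacent to a vertex of
-- `D₁ ∩ D₂` off `D₃`, and there `D₃` leaves `D₁ ∪ D₂`.
theorem inter_subset_of_not_isMinorOf (h₁ : IsPeripheralCycle H S D₁)
    (h₂ : IsPeripheralCycle H S D₂) (h₃ : IsCycleOn H D₃) (h₃S : D₃ ⊆ S)
    (h₁₂ : IsConnectedOn H (D₁ \ D₂)) (h₂₁ : IsConnectedOn H (D₂ \ D₁))
    (hx : x ∈ D₁ ∩ D₂ ∩ D₃) (hy : y ∈ D₁ ∩ D₂ ∩ D₃) (hxy : H.Adj x y)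
    (hno : ¬ (completeBipartiteGraph (Fin 3) (Fin 3)).IsMinorOf H) : D₁ ∩ D₂ ⊆ D₃ := by
  by_contra hsub
  obtain ⟨T, hT, hxT⟩ := exists_isComponentIn_mem (H := H) hx
  have hyT := hT.mem_of_adj x hxT y hy hxy
  have hTsub := hT.subset
  have harc := h₁.connected_inter h₁₂ ⟨x, (mem_inter.1 hx).1⟩
  obtain ⟨s, hs, z, hz, hsz⟩ := harc.touches_sdiff (A := T) (by grind) ⟨x, hxT⟩ (by grind)
  obtain ⟨q, hq, hsq⟩ : ∃ q ∈ T, H.Adj s q := by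
    rcases ne_or_eq s x with h | rfl
    · exact hT.connected.exists_adj hs hxT h
    · exact ⟨y, hyT, hxy⟩
  have hz₃ : z ∉ D₃ := fun h => (mem_sdiff.1 hz).2 (hT.mem_of_adj s hs z (by grind) hsz)
  have hqz : q ≠ z := by grind
  obtain ⟨n, hn, hnq, hsn⟩ := h₃.exists_adj_ne (v := s) (by grind) q
  have hoff : ∀ {D}, IsCycleOn H D → s ∈ D → q ∈ D → z ∈ D → n ∉ D := by
    intro D hD hsD hqD hzD hnD
    rcases hD.eq_or_eq_of_adj hsD hqD hzD hnD hqz hsq hsz hsn with rfl | rfl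
    exacts [hnq rfl, hz₃ hn]
  have hn₁ := hoff h₁.toIsCycleOn (by grind) (by grind) (by grind)
  have hn₂ := hoff h₂.toIsCycleOn (by grind) (by grind) (by grind)
  exact hno (completeBipartiteGraph_isMinorOf_of_adj_of_notMem h₁ h₂ h₁₂ h₂₁ (by grind) (by grind)
    (by grind) (by grind) hqz hsq hsz hsn)

/-- `K` links `X` to `Y` inside `R`: either `X` and `Y` touch already and `K` is empty, or `K` is
a component of `R` touching both. -/
def IsLink (H : SimpleGraph V) (R X Y K : Finset V) : Prop :=
  K = ∅ ∧ Touches H X Y ∨ IsComponentIn H R K ∧ Touches H K X ∧ Touches H K Y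

theorem IsLink.subset (hK : IsLink H R X Y K) : K ⊆ R :=
  hK.elim (fun h => h.1 ▸ empty_subset R) fun h => h.1.subset

theorem IsLink.connected_union (hK : IsLink H R X Y K) (hX : IsConnectedOn H X) :
    IsConnectedOn H (X ∪ K) := by
  rcases hK with ⟨rfl, -⟩ | ⟨hK, hKX, -⟩
  · rwa [union_empty]
  · exact hX.union hK.connected hKX.symm

theorem IsLink.touches_union (hK : IsLink H R X Y K) : Touches H (X ∪ K) Y :=
  hK.elim (fun h => h.2.mono subset_union_left subset_rfl)
    fun h => h.2.2.mono subset_union_right subset_rfl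

theorem exists_isLink (hX : IsConnectedOn H X) (hY : Y.Nonempty) (hXR : Disjoint X R)
    (hYX : Disjoint Y (X ∪ R)) (hconn : IsConnectedOn H (X ∪ Y ∪ R)) : ∃ K, IsLink H R X Y K := by
  by_cases hXY : Touches H X Y
  · exact ⟨∅, .inl ⟨rfl, hXY⟩⟩
  obtain ⟨x, hx⟩ := hX.nonempty
  obtain ⟨y, hy⟩ := hY
  obtain ⟨C, hC, hxC⟩ := exists_isComponentIn_mem (H := H) (mem_union_left R hx)
  have hCsub := hC.subset
  obtain ⟨p, hp, q, hq, hpq⟩ := hC.touches_sdiff (by grind) hconn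
    (by grind [Finset.disjoint_left])
  have hpR : p ∈ R := by
    by_contra hpR
    exact hXY ⟨p, by grind, q, by grind, hpq⟩
  obtain ⟨K, hK, hpK⟩ := exists_isComponentIn_mem (H := H) hpR
  have hKC := hC.subset_of_mem hK.connected (hK.subset.trans subset_union_right) hpK hp
  obtain ⟨k, hk, c, hc, hkc⟩ := hC.connected.touches_sdiff hKC hK.connected.nonempty fun h =>
    Finset.disjoint_left.1 hXR hx (hK.subset (h ▸ hxC))
  have hcX : c ∈ X := by
    have := hK.mem_of_adj k hk c
    grind
  exact ⟨K, .inr ⟨hK, ⟨k, hk, c, hcX, hkc⟩, ⟨p, hpK, q, by grind, hpq⟩⟩⟩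

theorem pairwise_disjoint_of_isLink {X K : Fin 3 → Finset V}
    (hK : ∀ i, IsLink H R (X i) (X (i + 1)) (K i))
    (h : ¬ ∃ L, IsComponentIn H R L ∧ ∀ i, Touches H L (X i)) :
    Pairwise fun i j => Disjoint (K i) (K j) := by
  intro i j hij
  rcases hK i with ⟨hi, -⟩ | ⟨hi, hiX, hiX'⟩
  · simp [hi]
  rcases hK j with ⟨hj, -⟩ | ⟨hj, hjX, hjX'⟩
  · simp [hj]
  refine Finset.disjoint_left.2 fun c hci hcj => h ⟨_, hi, fun k => ?_⟩
  rw [← hi.eq_of_mem hj hci hcj] at hjX hjX'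
  obtain rfl | rfl | rfl | rfl : k = i ∨ k = i + 1 ∨ k = j ∨ k = j + 1 := by lia
  all_goals assumption

theorem completeGraph_five_isMinorOf {P Q : Finset V} {Z : Fin 3 → Finset V}
    (hP : IsConnectedOn H P) (hQ : IsConnectedOn H Q) (hZ : ∀ i, IsConnectedOn H (Z i))
    (hPQ : Disjoint P Q) (hPZ : ∀ i, Disjoint P (Z i)) (hQZ : ∀ i, Disjoint Q (Z i))
    (hZZ : Pairwise fun i j => Disjoint (Z i) (Z j)) (hPQt : Touches H P Q)
    (hPZt : ∀ i, Touches H P (Z i)) (hQZt : ∀ i, Touches H Q (Z i))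
    (hZZt : Pairwise fun i j => Touches H (Z i) (Z j)) :
    (completeGraph (Fin 5)).IsMinorOf H := by
  refine completeGraph_isMinorOf (A := Matrix.vecCons P (Matrix.vecCons Q Z)) ?_ ?_ ?_
  · simp [Fin.forall_fin_succ (n := 4), Fin.forall_fin_succ (n := 3), hP, hQ, hZ]
  · refine pairwise_vecCons (r := Disjoint) (fun _ _ h => h.symm) ?_
      (pairwise_vecCons (r := Disjoint) (fun _ _ h => h.symm) hQZ hZZ)
    simp [Fin.forall_fin_succ (n := 3), hPQ, hPZ]
  · refine pairwise_vecCons (r := Touches H) (fun _ _ h => h.symm) ?_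
      (pairwise_vecCons (r := Touches H) (fun _ _ h => h.symm) hQZt hZZt)
    simp [Fin.forall_fin_succ (n := 3), hPQt, hPZt]

theorem isMinorOf_or_isMinorOf_of_poles {P Q : Finset V} {X : Fin 3 → Finset V}
    (hP : IsConnectedOn H P) (hQ : IsConnectedOn H Q) (hX : ∀ i, IsConnectedOn H (X i))
    (hPQ : Disjoint P Q) (hXX : Pairwise fun i j => Disjoint (X i) (X j))
    (hPX : ∀ i, Disjoint P (X i)) (hQX : ∀ i, Disjoint Q (X i)) (hPR : Disjoint P R)
    (hQR : Disjoint Q R) (hXR : ∀ i, Disjoint (X i) R) (hPQt : Touches H P Q)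
    (hPXt : ∀ i, Touches H P (X i)) (hQXt : ∀ i, Touches H Q (X i))
    (hrest : Pairwise fun i j => IsConnectedOn H (X i ∪ X j ∪ R)) :
    (completeGraph (Fin 5)).IsMinorOf H ∨
      (completeBipartiteGraph (Fin 3) (Fin 3)).IsMinorOf H := by
  by_cases htriple : ∃ K, IsComponentIn H R K ∧ ∀ i, Touches H K (X i)
  · obtain ⟨K, hK, hKX⟩ := htriple
    have hKsub := hK.subset
    right
    refine completeBipartiteGraph_isMinorOf (A := ![P, Q, K]) (B := X) ?_ hX
      (pairwise_disjoint_three hPQ (hPR.mono_right hKsub) (hQR.mono_right hKsub)) hXX ?_ ?_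
    · simp [Fin.forall_fin_succ, hP, hQ, hK.connected]
    · simp [Fin.forall_fin_succ, *, fun i => ((hXR i).mono_right hKsub).symm]
    · simp [Fin.forall_fin_succ, hPXt, hQXt, hKX]
  left
  choose! K hK using fun i j (hij : i ≠ j) => exists_isLink (hX i) (hX j).nonempty (hXR i)
    (disjoint_union_right.2 ⟨hXX hij.symm, hXR j⟩) (hrest hij)
  have hK' (i : Fin 3) := hK i (i + 1) (by simp)
  have hKR (i : Fin 3) := (hK' i).subset
  have hKK := pairwise_disjoint_of_isLink hK' htriple
  refine completeGraph_five_isMinorOf hP hQ (fun i => (hK' i).connected_union (hX i)) hPQ ?_ ?_ ?_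
    hPQt ?_ ?_ ?_
  · exact fun i => disjoint_union_right.2 ⟨hPX i, hPR.mono_right (hKR i)⟩
  · exact fun i => disjoint_union_right.2 ⟨hQX i, hQR.mono_right (hKR i)⟩
  · intro i j hij
    simp only [disjoint_union_left, disjoint_union_right]
    exact ⟨⟨hXX hij, ((hXR j).mono_right (hKR i)).symm⟩, (hXR i).mono_right (hKR j), hKK hij⟩
  · exact fun i => (hPXt i).mono subset_rfl subset_union_left
  · exact fun i => (hQXt i).mono subset_rfl subset_union_left
  · intro i j hij
    obtain rfl | rfl : j = i + 1 ∨ i = j + 1 := by lia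
    · exact (hK' i).touches_union.mono subset_rfl subset_union_left
    · exact ((hK' j).touches_union.mono subset_rfl subset_union_left).symm

theorem IsCycleOn.exists_connected_pair (hD : IsCycleOn H D) (hDE : IsConnectedOn H (D \ E))
    (hx : x ∈ D ∩ E) (hy : y ∈ D ∩ E) (hxy : H.Adj x y) :
    ∃ v ∈ D ∩ E, ∃ L ⊆ (D ∩ E).erase v, IsConnectedOn H L ∧ Touches H L {v} ∧
      Touches H L (D \ E) ∧ Touches H {v} (D \ E) := by
  have harc : IsConnectedOn H (D ∩ E) := hD.connected_inter hDE ⟨x, hx⟩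
  obtain ⟨v, hv, w, hw, hvw⟩ := hD.connected.touches_sdiff inter_subset_left ⟨x, hx⟩
    fun h => hDE.nonempty.ne_empty (sdiff_eq_empty_iff_subset.2 (inter_eq_left.1 h))
  rw [sdiff_inter_self_left] at hw
  obtain ⟨q, hq, hvq⟩ : ∃ q ∈ D ∩ E, H.Adj v q := by
    rcases ne_or_eq v x with h | rfl
    · exact harc.exists_adj hv hx h
    · exact ⟨y, hy, hxy⟩
  obtain ⟨L, hL⟩ := exists_isArm hv hq hvq
  exact ⟨v, hv, L, hL.subset, hL.connected, ⟨q, hL.mem, v, mem_singleton_self v, hvq.symm⟩,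
    hL.touches_left hD hDE.nonempty, ⟨v, mem_singleton_self v, w, hw, hvw⟩⟩

theorem sdiff_union_sdiff_union_sdiff_biUnion {D : Fin 3 → Finset V} (hD : ∀ i, D i ⊆ S)
    {i j k : Fin 3} (hk : ∀ l, l = i ∨ l = j ∨ l = k) :
    D i \ D k ∪ D j \ D k ∪ S \ univ.biUnion D = S \ D k := by
  ext z
  have hi := @hD i z
  have hj := @hD j z
  have hcover : (∃ l, z ∈ D l) ↔ z ∈ D i ∨ z ∈ D j ∨ z ∈ D k :=
    ⟨fun ⟨l, hl⟩ => by rcases hk l with rfl | rfl | rfl <;> simp [hl],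
      fun h => by rcases h with h | h | h <;> exact ⟨_, h⟩⟩
  simp only [mem_union, mem_sdiff, mem_biUnion, mem_univ, true_and, hcover]
  tauto

theorem isMinorOf_or_isMinorOf_of_inter_eq {A : Finset V} {D : Fin 3 → Finset V}
    (hD : ∀ i, IsPeripheralCycle H S (D i))
    (hdiff : Pairwise fun i j => IsConnectedOn H (D i \ D j))
    (hA : Pairwise fun i j => D i ∩ D j = A) (hx : x ∈ A) (hy : y ∈ A) (hxy : H.Adj x y) :
    (completeGraph (Fin 5)).IsMinorOf H ∨
      (completeBipartiteGraph (Fin 3) (Fin 3)).IsMinorOf H := by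
  have hAD (i : Fin 3) : A ⊆ D i := hA (i := i) (j := i + 1) (by simp) ▸ inter_subset_left
  have hXeq : ∀ i j, i ≠ j → D i \ D j = D i \ A := fun i j hij => by
    rw [← hA hij, sdiff_inter_self_left]
  have hXt : ∀ T ⊆ A, Touches H T (D 0 \ D 1) → ∀ i, Touches H T (D i \ A) := by
    intro T hT hT0 i
    rcases eq_or_ne i 0 with rfl | hi
    · exact hXeq 0 1 (by simp) ▸ hT0
    rw [hXeq 0 1 (by simp), ← hXeq 0 i hi.symm] at hT0
    rw [← hXeq i 0 hi]
    exact (hD 0).touches_sdiff_swap (hD i).toIsCycleOn (hT.trans (hAD 0)) (hT.trans (hAD i)) hT0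
  have hA01 : A = D 0 ∩ D 1 := (hA (by simp)).symm
  obtain ⟨v, hv, L, hL, hLc, hLv, hLt, hvt⟩ :=
    (hD 0).exists_connected_pair (hdiff (by simp)) (hA01 ▸ hx) (hA01 ▸ hy) hxy
  rw [← hA01] at hv hL
  have hLA : L ⊆ A := hL.trans (erase_subset v A)
  have hvA : {v} ⊆ A := singleton_subset_iff.2 hv
  have hDR (i : Fin 3) : Disjoint (D i) (S \ univ.biUnion D) :=
    disjoint_sdiff.mono_left (subset_biUnion_of_mem D (mem_univ i))
  refine isMinorOf_or_isMinorOf_of_poles hLc (isConnectedOn_singleton v)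
    (fun i => hXeq i (i + 1) (by simp) ▸ hdiff (by simp))
    (disjoint_singleton_right.2 fun h => notMem_erase v A (hL h)) ?_
    (fun i => disjoint_sdiff.mono_left hLA) (fun i => disjoint_sdiff.mono_left hvA)
    ((hDR 0).mono_left (hLA.trans (hAD 0))) ((hDR 0).mono_left (hvA.trans (hAD 0)))
    (fun i => (hDR i).mono_left sdiff_subset) hLv (hXt L hLA hLt) (hXt {v} hvA hvt) ?_
  · intro i j hij
    rw [← hXeq i j hij]
    exact disjoint_sdiff_self_left.mono_right sdiff_subset
  · intro i j hij
    obtain ⟨k, hik, hjk, hk⟩ : ∃ k, i ≠ k ∧ j ≠ k ∧ ∀ l, l = i ∨ l = j ∨ l = k := by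
      decide +revert
    rw [← hXeq i k hik, ← hXeq j k hjk,
      sdiff_union_sdiff_union_sdiff_biUnion (fun l => (hD l).subset) hk]
    exact (hD k).connected_sdiff

theorem not_isPlanar_of_isPeripheralCycle {D : Fin 3 → Finset V}
    (hD : ∀ i, IsPeripheralCycle H S (D i))
    (hdiff : Pairwise fun i j => IsConnectedOn H (D i \ D j)) (hx : ∀ i, x ∈ D i)
    (hy : ∀ i, y ∈ D i) (hxy : H.Adj x y) : ¬ H.IsPlanar := by
  rintro ⟨h5, h33⟩
  have hsub : ∀ i j k, i ≠ j → D i ∩ D j ⊆ D k := fun i j k hij =>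
    inter_subset_of_not_isMinorOf (hD i) (hD j) (hD k).toIsCycleOn (hD k).subset (hdiff hij)
      (hdiff hij.symm) (by simp [hx]) (by simp [hy]) hxy h33
  refine (isMinorOf_or_isMinorOf_of_inter_eq (A := D 0 ∩ D 1) hD hdiff (fun i j hij => ?_)
    (by simp [hx]) (by simp [hy]) hxy).elim h5 h33
  exact (subset_inter (hsub i j 0 hij) (hsub i j 1 hij)).antisymm
    (subset_inter (hsub 0 1 i (by simp)) (hsub 0 1 j (by simp)))

end PeripheralCycles

section LinearAlgebra

theorem exists_ne_zero_forall_sum_mul_eq_zero {ι κ K : Type*} [Field K] {E : Finset ι}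
    {T : Finset κ} (M : ι → κ → K) (h : #T < #E) :
    ∃ J : ι → K, (∃ e ∈ E, J e ≠ 0) ∧ ∀ t ∈ T, ∑ e ∈ E, J e * M e t = 0 := by
  let A : Matrix E T K := .of fun e t => M e t
  obtain ⟨J, hJ, hJ0⟩ := (Submodule.ne_bot_iff _).1
    (LinearMap.ker_ne_bot_of_finrank_lt (f := A.vecMulLinear) (by simpa using h))
  obtain ⟨e, he⟩ := Function.ne_iff.1 hJ0
  refine ⟨fun e => if he : e ∈ E then J ⟨e, he⟩ else 0, ⟨e, e.2, by simpa using he⟩,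
    fun t ht => ?_⟩
  rw [← sum_coe_sort]
  simpa [A, Matrix.vecMul, dotProduct] using congrFun hJ ⟨t, ht⟩

variable {V κ : Type*} {d : κ → V → ZMod 2} {E : Finset κ} {S : Finset V} {τ : V → ZMod 2}

theorem eq_zero_of_sum_eq_zero {s : V} (hsupp : ∀ v ∉ S, τ v = 0) (hsum : ∑ v ∈ S, τ v = 0)
    (h : ∀ v ∈ S.erase s, τ v = 0) : τ = 0 := by
  ext v
  by_cases hv : v ∈ S.erase s
  · exact h v hv
  by_cases hvS : v ∈ S
  · obtain rfl : v = s := by grind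
    rwa [← add_sum_erase S τ hvS, sum_eq_zero h, add_zero] at hsum
  · exact hsupp v hvS

theorem exists_nonempty_subset_sum_eq_zero (hsupp : ∀ e ∈ E, ∀ v ∉ S, d e v = 0)
    (hsum : ∀ e ∈ E, ∑ v ∈ S, d e v = 0) (hS : S.Nonempty) (hcard : #S ≤ #E) :
    ∃ F ⊆ E, F.Nonempty ∧ ∑ e ∈ F, d e = 0 := by
  obtain ⟨s, hs⟩ := hS
  obtain ⟨J, ⟨e, he, hJe⟩, hJ⟩ := exists_ne_zero_forall_sum_mul_eq_zero d
    (E := E) (T := S.erase s) ((card_erase_lt_of_mem hs).trans_le hcard)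
  have hFE : {e ∈ E | J e ≠ 0} ⊆ E := filter_subset _ E
  refine ⟨_, hFE, ⟨e, mem_filter.2 ⟨he, hJe⟩⟩, eq_zero_of_sum_eq_zero (S := S) (s := s) ?_ ?_ ?_⟩
  · intro v hv
    rw [Finset.sum_apply, sum_eq_zero fun e he => hsupp e (hFE he) v hv]
  · simp only [Finset.sum_apply]
    rw [sum_comm, sum_eq_zero fun e he => hsum e (hFE he)]
  · intro v hv
    rw [Finset.sum_apply, sum_filter]
    refine (sum_congr rfl fun e _ => ?_).trans (hJ v hv)
    have hJe : J e = 0 ∨ J e = 1 := Fin.exists_fin_two.1 ⟨J e, rfl⟩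
    rcases hJe with h | h <;> simp [h]

-- Adjoin `τ` to the family `d`, as the value at `none`.
theorem exists_subset_sum_eq (hsupp : ∀ e ∈ E, ∀ v ∉ S, d e v = 0)
    (hsum : ∀ e ∈ E, ∑ v ∈ S, d e v = 0) (hτ : ∀ v ∉ S, τ v = 0) (hτsum : ∑ v ∈ S, τ v = 0)
    (hS : S.Nonempty) (hcard : #S ≤ #E + 1)
    (hindep : ∀ F ⊆ E, F.Nonempty → ∑ e ∈ F, d e ≠ 0) : ∃ F ⊆ E, ∑ e ∈ F, d e = τ := by
  obtain ⟨F, hFE, ⟨x, hx⟩, hF⟩ := exists_nonempty_subset_sum_eq_zero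
    (d := fun o : Option κ => o.elim τ d) (E := insertNone E) (S := S)
    (by simpa [Option.forall] using ⟨hτ, hsupp⟩) (by simpa [Option.forall] using ⟨hτsum, hsum⟩) hS
    (by simpa using hcard)
  have hFE' : eraseNone F ⊆ E := fun e he => by simpa using hFE (mem_eraseNone.1 he)
  refine ⟨eraseNone F, hFE', ?_⟩
  by_cases hnone : none ∈ F
  · rw [← insert_eq_self.2 hnone, ← insertNone_eraseNone, sum_insertNone] at hF
    simpa [ZModModule.neg_eq_self] using (neg_eq_of_add_eq_zero_right hF).symm
  · rw [← erase_eq_of_notMem hnone, ← map_some_eraseNone, sum_map] at hF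
    refine absurd hF (hindep _ hFE' ?_)
    cases x with
    | none => exact absurd hx hnone
    | some e => exact ⟨e, mem_eraseNone.2 hx⟩

end LinearAlgebra

section Boundary

variable {V ι : Type*} {ends : ι → Sym2 V} {A S : Finset V} {E F F' : Finset ι} {v : V}

/-- The mod-2 incidence vector of the unordered pair `e`; it vanishes when `e` is a loop. -/
noncomputable def edgeBoundary (e : Sym2 V) : V → ZMod 2 :=
  e.lift ⟨fun x y => Pi.single x 1 + Pi.single y 1, fun _ _ => add_comm _ _⟩

/-- The mod-2 boundary of a set `F` of edges of the multigraph with incidence map `ends`: its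
value at a vertex is the parity of the degree of that vertex in `F`. -/
noncomputable def boundary (ends : ι → Sym2 V) (F : Finset ι) : V → ZMod 2 :=
  ∑ e ∈ F, edgeBoundary (ends e)

/-- The set `verts ends F` of all ends of the edges in `F`. -/
noncomputable def verts (ends : ι → Sym2 V) (F : Finset ι) : Finset V :=
  F.biUnion fun e => (ends e).toFinset

/-- The edges of `F` having an end in `A`. -/
noncomputable def edgesAt (ends : ι → Sym2 V) (F : Finset ι) (A : Finset V) : Finset ι :=
  {e ∈ F | ∃ v ∈ A, v ∈ ends e}

theorem edgeBoundary_mk (x y : V) :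
    edgeBoundary s(x, y) = Pi.single x 1 + Pi.single y 1 := rfl

theorem edgeBoundary_apply_of_notMem {e : Sym2 V} (h : v ∉ e) : edgeBoundary e v = 0 := by
  induction e with | _ x y
  simp_all [edgeBoundary_mk]

theorem edgeBoundary_apply_of_mem {e : Sym2 V} (h : v ∈ e) (hdiag : ¬ e.IsDiag) :
    edgeBoundary e v = 1 := by
  induction e with | _ x y
  rw [Sym2.mk_isDiag_iff] at hdiag
  rcases Sym2.mem_iff.1 h with rfl | rfl <;>
    simp [edgeBoundary_mk, hdiag, Ne.symm hdiag]

theorem edgeBoundary_of_isDiag {e : Sym2 V} (h : e.IsDiag) : edgeBoundary e = 0 := by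
  induction e with | _ x y
  rw [Sym2.mk_isDiag_iff] at h
  rw [h, edgeBoundary_mk, ZModModule.add_self]

theorem sum_edgeBoundary {e : Sym2 V} (h : ∀ v ∈ e, v ∈ S) : ∑ v ∈ S, edgeBoundary e v = 0 := by
  induction e with | _ x y
  have hx := h x (Sym2.mem_mk_left x y)
  have hy := h y (Sym2.mem_mk_right x y)
  simp [edgeBoundary_mk, sum_add_distrib, hx, hy, ZModModule.add_self]

theorem sum_edgeBoundary_of_forall_mem {A : Finset V} {e : Sym2 V}
    (h : ∀ a ∈ e, ∀ b ∈ e, a ∈ A → b ∈ A) : ∑ v ∈ A, edgeBoundary e v = 0 := by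
  by_cases hA : ∃ a ∈ e, a ∈ A
  · obtain ⟨a, ha, haA⟩ := hA
    exact sum_edgeBoundary fun b hb => h a ha b hb haA
  · exact sum_eq_zero fun v hv => edgeBoundary_apply_of_notMem fun hve => hA ⟨v, hve, hv⟩

theorem boundary_union (h : Disjoint F F') :
    boundary ends (F ∪ F') = boundary ends F + boundary ends F' :=
  sum_union h

theorem boundary_apply (F : Finset ι) (v : V) :
    boundary ends F v = ∑ e ∈ F, edgeBoundary (ends e) v :=
  Finset.sum_apply v F _

theorem boundary_apply_of_notMem (h : ∀ e ∈ F, v ∉ ends e) : boundary ends F v = 0 := by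
  rw [boundary_apply, sum_eq_zero fun e he => edgeBoundary_apply_of_notMem (h e he)]

theorem sum_boundary (h : ∀ e ∈ F, ∀ v ∈ ends e, v ∈ S) : ∑ v ∈ S, boundary ends F v = 0 := by
  simp only [boundary_apply]
  rw [sum_comm, sum_eq_zero fun e he => sum_edgeBoundary (h e he)]

theorem boundary_apply_eq_card (h : ∀ e ∈ F, ¬ (ends e).IsDiag) :
    boundary ends F v = (#{e ∈ F | v ∈ ends e} : ZMod 2) := by
  rw [boundary_apply, card_filter, Nat.cast_sum]
  refine sum_congr rfl fun e he => ?_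
  by_cases hv : v ∈ ends e
  · simp [hv, edgeBoundary_apply_of_mem hv (h e he)]
  · simp [hv, edgeBoundary_apply_of_notMem hv]

theorem sum_card_filter_mem (hF : ∀ e ∈ F, ¬ (ends e).IsDiag)
    (hS : ∀ e ∈ F, ∀ v ∈ ends e, v ∈ S) : ∑ v ∈ S, #{e ∈ F | v ∈ ends e} = 2 * #F := by
  have h := sum_card_bipartiteAbove_eq_sum_card_bipartiteBelow (s := S) (t := F)
    fun v e => v ∈ ends e
  simp only [bipartiteAbove, bipartiteBelow] at h
  rw [h, mul_comm, ← smul_eq_mul, ← sum_const]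
  refine sum_congr rfl fun e he => ?_
  rw [← Sym2.card_toFinset_of_not_isDiag _ (hF e he)]
  congr 1
  ext u
  simpa using hS e he u

theorem exists_nonempty_boundary_eq_zero (hE : ∀ e ∈ E, ∀ v ∈ ends e, v ∈ S) (hS : S.Nonempty)
    (hcard : #S ≤ #E) : ∃ F ⊆ E, F.Nonempty ∧ boundary ends F = 0 :=
  exists_nonempty_subset_sum_eq_zero
    (fun e he _ hv => edgeBoundary_apply_of_notMem (mt (hE e he _) hv))
    (fun e he => sum_edgeBoundary (hE e he)) hS hcard

theorem mem_verts : v ∈ verts ends F ↔ ∃ e ∈ F, v ∈ ends e := by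
  simp [verts]

theorem mem_edgesAt {e : ι} : e ∈ edgesAt ends F A ↔ e ∈ F ∧ ∃ v ∈ A, v ∈ ends e :=
  mem_filter

theorem edgesAt_subset : edgesAt ends F A ⊆ F :=
  filter_subset _ F

theorem edgesAt_union (F : Finset ι) (A B : Finset V) :
    edgesAt ends F (A ∪ B) = edgesAt ends F A ∪ edgesAt ends F B := by
  ext e
  simp [mem_edgesAt, or_and_right, exists_or, and_or_left]

theorem boundary_edgesAt_of_mem (hv : v ∈ A) :
    boundary ends (edgesAt ends F A) v = boundary ends F v := by
  rw [boundary_apply, boundary_apply]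
  exact sum_subset edgesAt_subset fun e he hA =>
    edgeBoundary_apply_of_notMem fun h => hA (mem_edgesAt.2 ⟨he, v, hv, h⟩)

theorem boundary_edgesAt_of_forall (h : ∀ e ∈ F, v ∈ ends e → ∀ u ∈ A, u ∉ ends e) :
    boundary ends (edgesAt ends F A) v = 0 :=
  boundary_apply_of_notMem fun e he hv =>
    let ⟨heF, u, hu, hue⟩ := mem_edgesAt.1 he
    h e heF hv u hu hue

end Boundary

section TightSets

variable {V ι : Type*} {ends : ι → Sym2 V} {C C' E E' F R : Finset ι} {A B : Finset V} {e f : ι}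
  {u v : V} {w : ι → ℝ}

/-- The simple graph underlying the multigraph with edge set `E` and incidence map `ends`. -/
def underlying (ends : ι → Sym2 V) (E : Finset ι) : SimpleGraph V :=
  fromEdgeSet (ends '' E)

theorem underlying_adj : (underlying ends E).Adj u v ↔ (∃ e ∈ E, ends e = s(u, v)) ∧ u ≠ v := by
  simp [underlying]

/-- A weighting of the edges in `E` for which every nonempty even subset of `E` (a nonzero element
of the cycle space) has weight at least one, the weights being strictly between `0` and `1 / 2`. -/
structure IsStrictWeighting (ends : ι → Sym2 V) (E : Finset ι) (w : ι → ℝ) : Prop where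
  pos : ∀ e ∈ E, 0 < w e
  lt_half : ∀ e ∈ E, w e < 1 / 2
  one_le : ∀ F ⊆ E, F.Nonempty → boundary ends F = 0 → 1 ≤ ∑ e ∈ F, w e

/-- A nonempty even set of edges whose weight is exactly one. -/
structure IsTight (ends : ι → Sym2 V) (E : Finset ι) (w : ι → ℝ) (C : Finset ι) : Prop where
  subset : C ⊆ E
  nonempty : C.Nonempty
  boundary_eq_zero : boundary ends C = 0
  sum_eq_one : ∑ e ∈ C, w e = 1

theorem underlying_mono (h : E' ⊆ E) : underlying ends E' ≤ underlying ends E :=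
  fromEdgeSet_mono (Set.image_mono (coe_subset.2 h))

theorem mem_verts_of_mem (he : e ∈ F) (hv : v ∈ ends e) : v ∈ verts ends F :=
  mem_verts.2 ⟨e, he, hv⟩

theorem verts_nonempty (h : F.Nonempty) : (verts ends F).Nonempty :=
  let ⟨e, he⟩ := h
  ⟨_, mem_verts_of_mem he (Sym2.out_fst_mem (ends e))⟩

namespace IsStrictWeighting

theorem not_isDiag (hw : IsStrictWeighting ends E w) (he : e ∈ E) : ¬ (ends e).IsDiag := by
  intro h
  have hone := hw.one_le {e} (singleton_subset_iff.2 he) (singleton_nonempty e)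
    (by rw [boundary, sum_singleton, edgeBoundary_of_isDiag h])
  rw [sum_singleton] at hone
  linarith [hw.lt_half e he]

theorem injOn (hw : IsStrictWeighting ends E w) : Set.InjOn ends E := by
  intro e he f hf h
  by_contra hne
  have hone := hw.one_le {e, f} (insert_subset he (singleton_subset_iff.2 hf))
    (insert_nonempty e {f}) (by rw [boundary, sum_pair hne, h, ZModModule.add_self])
  rw [sum_pair hne] at hone
  linarith [hw.lt_half e he, hw.lt_half f hf]

theorem adj (hw : IsStrictWeighting ends E w) (he : e ∈ E) (h : ends e = s(u, v)) :
    (underlying ends E).Adj u v :=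
  underlying_adj.2 ⟨⟨e, he, h⟩, by simpa [h] using hw.not_isDiag he⟩

theorem sum_lt_sum (hw : IsStrictWeighting ends E w) (hFC : F ⊆ C) (hC : C ⊆ E) (he : e ∈ C)
    (heF : e ∉ F) : ∑ e ∈ F, w e < ∑ e ∈ C, w e :=
  sum_lt_sum_of_subset hFC he heF (hw.pos e (hC he)) fun f hf _ => (hw.pos f (hC hf)).le

theorem disjoint_edgesAt (hw : IsStrictWeighting ends E w) (hF : F ⊆ E) (hAB : Disjoint A B)
    (h : ¬ Touches (underlying ends E) A B) :
    Disjoint (edgesAt ends F A) (edgesAt ends F B) := by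
  refine Finset.disjoint_left.2 fun e heA heB => ?_
  obtain ⟨he, u, hu, hue⟩ := mem_edgesAt.1 heA
  obtain ⟨-, v, hv, hve⟩ := mem_edgesAt.1 heB
  have huv : u ≠ v := fun huv => Finset.disjoint_left.1 hAB hu (huv ▸ hv)
  exact h ⟨u, hu, v, hv, hw.adj (hF he) ((Sym2.mem_and_mem_iff huv).1 ⟨hue, hve⟩)⟩

end IsStrictWeighting

namespace IsTight

theorem eq_of_subset (hC : IsTight ends E w C) (hw : IsStrictWeighting ends E w) (hF : F ⊆ C)
    (hne : F.Nonempty) (hF0 : boundary ends F = 0) : F = C := by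
  by_contra h
  obtain ⟨e, he, heF⟩ := exists_of_ssubset (hF.ssubset_of_ne h)
  linarith [hw.sum_lt_sum hF hC.subset he heF, hw.one_le F (hF.trans hC.subset) hne hF0,
    hC.sum_eq_one]

theorem boundary_erase_ne_zero (hC : IsTight ends E w C) (hw : IsStrictWeighting ends E w)
    (hf : f ∈ C) (hF : F ⊆ C.erase f) (hne : F.Nonempty) : boundary ends F ≠ 0 := by
  intro hF0
  rw [hC.eq_of_subset hw (hF.trans (erase_subset f C)) hne hF0] at hF
  exact notMem_erase f C (hF hf)

theorem three_le_card (hC : IsTight ends E w C) (hw : IsStrictWeighting ends E w) :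
    3 ≤ #C := by
  have hlt := sum_lt_sum_of_nonempty hC.nonempty fun e he => hw.lt_half e (hC.subset he)
  rw [hC.sum_eq_one, sum_const, nsmul_eq_mul] at hlt
  have hcard : (2 : ℝ) < #C := by linarith
  exact_mod_cast hcard

theorem card_le (hC : IsTight ends E w C) (hw : IsStrictWeighting ends E w) :
    #C ≤ #(verts ends C) := by
  obtain ⟨f, hf⟩ := hC.nonempty
  by_contra! hlt
  obtain ⟨F, hF, hne, hF0⟩ := exists_nonempty_boundary_eq_zero (E := C.erase f)
    (fun e he v hv => mem_verts_of_mem (mem_of_mem_erase he) hv) (verts_nonempty hC.nonempty)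
    (by rw [card_erase_of_mem hf]; exact Nat.le_sub_one_of_lt hlt)
  exact hC.boundary_erase_ne_zero hw hf hF hne hF0

theorem two_le_card (hC : IsTight ends E w C) (hw : IsStrictWeighting ends E w)
    (hv : v ∈ verts ends C) : 2 ≤ #{e ∈ C | v ∈ ends e} := by
  obtain ⟨e, he, hve⟩ := mem_verts.1 hv
  have hpos : 0 < #{e ∈ C | v ∈ ends e} := card_pos.2 ⟨e, mem_filter.2 ⟨he, hve⟩⟩
  have heven := boundary_apply_eq_card (v := v) fun e he => hw.not_isDiag (hC.subset he)
  rw [hC.boundary_eq_zero, Pi.zero_apply, eq_comm, ZMod.natCast_eq_zero_iff_even] at heven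
  obtain ⟨k, hk⟩ := heven
  lia

theorem sum_card (hC : IsTight ends E w C) (hw : IsStrictWeighting ends E w) :
    ∑ v ∈ verts ends C, #{e ∈ C | v ∈ ends e} = 2 * #C :=
  sum_card_filter_mem (fun _ he => hw.not_isDiag (hC.subset he))
    fun _ he _ hv => mem_verts_of_mem he hv

theorem card_verts (hC : IsTight ends E w C) (hw : IsStrictWeighting ends E w) :
    #(verts ends C) = #C := by
  have h := sum_le_sum fun v hv => hC.two_le_card hw (v := v) hv
  rw [hC.sum_card hw, sum_const, smul_eq_mul] at h
  exact le_antisymm (by lia) (hC.card_le hw)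

theorem card_eq_two (hC : IsTight ends E w C) (hw : IsStrictWeighting ends E w)
    (hv : v ∈ verts ends C) : #{e ∈ C | v ∈ ends e} = 2 := by
  refine ((sum_eq_sum_iff_of_le fun v hv => hC.two_le_card hw hv).1 ?_ v hv).symm
  rw [hC.sum_card hw, sum_const, smul_eq_mul, hC.card_verts hw, mul_comm]

theorem connected (hC : IsTight ends E w C) (hw : IsStrictWeighting ends E w) :
    IsConnectedOn (underlying ends E) (verts ends C) := by
  refine isConnectedOn_iff.2 ⟨verts_nonempty hC.nonempty, fun A hA ⟨a, ha⟩ hAC => ?_⟩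
  by_contra htouch
  have hclosed : ∀ e ∈ C, ∀ v ∉ A, v ∈ ends e → ∀ u ∈ A, u ∉ ends e := fun e he v hvA hv u hu hue =>
    htouch ⟨u, hu, v, mem_sdiff.2 ⟨mem_verts_of_mem he hv, hvA⟩, hw.adj (hC.subset he)
      ((Sym2.mem_and_mem_iff (ne_of_mem_of_not_mem hu hvA)).1 ⟨hue, hv⟩)⟩
  obtain ⟨e, he, hae⟩ := mem_verts.1 (hA ha)
  have hEA : edgesAt ends C A = C := by
    refine hC.eq_of_subset hw edgesAt_subset ⟨e, mem_edgesAt.2 ⟨he, a, ha, hae⟩⟩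
      (funext fun v => ?_)
    by_cases hv : v ∈ A
    · rw [boundary_edgesAt_of_mem hv, hC.boundary_eq_zero]
    · exact boundary_edgesAt_of_forall fun e he => hclosed e he v hv
  refine hAC (hA.antisymm fun v hv => ?_)
  obtain ⟨f, hf, hvf⟩ := mem_verts.1 hv
  obtain ⟨-, u, hu, huf⟩ := mem_edgesAt.1 (hEA.symm ▸ hf)
  by_contra hvA
  exact hclosed f hf v hvA hvf u hu huf

-- `R` closes up with either of two complementary parts of `C` to an even set.
theorem half_le (hC : IsTight ends E w C) (hw : IsStrictWeighting ends E w) (hR : R ⊆ E)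
    (hdisj : Disjoint R C) (hne : R.Nonempty) (hR0 : ∀ v ∉ verts ends C, boundary ends R v = 0) :
    1 / 2 ≤ ∑ e ∈ R, w e := by
  obtain ⟨f, hf⟩ := hC.nonempty
  have hR_sum : ∑ v ∈ verts ends C, boundary ends R v = 0 := by
    refine (sum_subset (s₂ := verts ends E) (biUnion_subset_biUnion_of_subset_left _ hC.subset)
      fun v _ hv => hR0 v hv).trans ?_
    exact sum_boundary fun e he v hv => mem_verts_of_mem (hR he) hv
  obtain ⟨F, hF, hFR⟩ := exists_subset_sum_eq (d := fun e => edgeBoundary (ends e))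
    (E := C.erase f) (S := verts ends C)
    (fun e he v hv => edgeBoundary_apply_of_notMem
      fun h => hv (mem_verts_of_mem (mem_of_mem_erase he) h))
    (fun e he => sum_edgeBoundary fun v hv => mem_verts_of_mem (mem_of_mem_erase he) hv)
    hR0 hR_sum (verts_nonempty hC.nonempty) (by rw [card_erase_add_one hf, hC.card_verts hw])
    (fun F hF hne => hC.boundary_erase_ne_zero hw hf hF hne)
  have hFC : F ⊆ C := hF.trans (erase_subset f C)
  have hF' : boundary ends (C \ F) = boundary ends R := by
    rw [← ZModModule.neg_eq_self (boundary ends R), ← hFR]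
    refine eq_neg_of_add_eq_zero_left ((sum_sdiff hFC).trans hC.boundary_eq_zero)
  have one_le {X : Finset ι} (hX : X ⊆ C) (hXR : boundary ends X = boundary ends R) :
      1 ≤ ∑ e ∈ R, w e + ∑ e ∈ X, w e := by
    have hRX := hdisj.mono_right hX
    rw [← sum_union hRX]
    exact hw.one_le _ (union_subset hR (hX.trans hC.subset)) (hne.mono subset_union_left)
      (by rw [boundary_union hRX, hXR, ZModModule.add_self])
  have hsum := sum_sdiff (f := w) hFC
  linarith [one_le hFC hFR, one_le sdiff_subset hF', hC.sum_eq_one]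

theorem mem_of_ends_subset (hC : IsTight ends E w C) (hw : IsStrictWeighting ends E w)
    (he : e ∈ E) (h : ∀ v ∈ ends e, v ∈ verts ends C) : e ∈ C := by
  by_contra heC
  have hhalf := hC.half_le hw (R := {e}) (singleton_subset_iff.2 he)
    (disjoint_singleton_left.2 heC) (singleton_nonempty e) fun v hv =>
      boundary_apply_of_notMem fun f hf hvf => hv (h v (mem_singleton.1 hf ▸ hvf))
  rw [sum_singleton] at hhalf
  linarith [hw.lt_half e he]

theorem eq_of_verts_subset (hC : IsTight ends E w C) (hw : IsStrictWeighting ends E w)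
    (hC' : IsTight ends E w C') (h : verts ends C' ⊆ verts ends C) : C' = C :=
  hC.eq_of_subset hw (fun _ he => hC.mem_of_ends_subset hw (hC'.subset he) fun _ hv =>
    h (mem_verts_of_mem he hv)) hC'.nonempty hC'.boundary_eq_zero

theorem isCycleOn (hC : IsTight ends E w C) (hw : IsStrictWeighting ends E w) :
    IsCycleOn (underlying ends E) (verts ends C) := by
  refine ⟨hC.connected hw, fun v hv => ?_⟩
  have hinj : Set.InjOn ends ({e ∈ C | v ∈ ends e} : Finset ι) :=
    hw.injOn.mono fun e he => hC.subset (mem_filter.1 he).1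
  rw [← hC.card_eq_two hw hv, ← card_image_of_injOn hinj, ← card_map (Sym2.mkEmbedding v)]
  congr 1
  ext z
  simp only [mem_map, mem_image, mem_filter, underlying_adj]
  constructor
  · rintro ⟨u, ⟨hu, ⟨e, he, heq⟩, -⟩, rfl⟩
    refine ⟨e, ⟨hC.mem_of_ends_subset hw he ?_, ?_⟩, heq⟩ <;> simp [heq, hu, hv]
  · rintro ⟨e, ⟨he, u, hu⟩, rfl⟩
    have hadj := hw.adj (hC.subset he) hu
    exact ⟨u, ⟨mem_verts_of_mem he (hu ▸ Sym2.mem_mk_right v u), underlying_adj.1 hadj⟩, hu.symm⟩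

theorem half_le_edgesAt (hC : IsTight ends E w C) (hw : IsStrictWeighting ends E w)
    (hC' : IsTight ends E w C') (hA : A ⊆ verts ends C' \ verts ends C) (hne : A.Nonempty)
    (hclosed : ¬ Touches (underlying ends E) A ((verts ends C' \ verts ends C) \ A)) :
    1 / 2 ≤ ∑ e ∈ edgesAt ends C' A, w e := by
  have hAC : ∀ v ∈ A, v ∈ verts ends C' ∧ v ∉ verts ends C := fun v hv => mem_sdiff.1 (hA hv)
  refine hC.half_le hw (edgesAt_subset.trans hC'.subset) ?_ ?_ fun v hv => ?_
  · refine Finset.disjoint_left.2 fun e heA heC => ?_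
    obtain ⟨-, v, hv, hve⟩ := mem_edgesAt.1 heA
    exact (hAC v hv).2 (mem_verts_of_mem heC hve)
  · obtain ⟨v, hv⟩ := hne
    obtain ⟨e, he, hve⟩ := mem_verts.1 (hAC v hv).1
    exact ⟨e, mem_edgesAt.2 ⟨he, v, hv, hve⟩⟩
  · by_cases hvA : v ∈ A
    · rw [boundary_edgesAt_of_mem hvA, hC'.boundary_eq_zero, Pi.zero_apply]
    · refine boundary_edgesAt_of_forall fun e he hve u hu hue => hclosed ⟨u, hu, v, ?_, ?_⟩
      · simp [mem_verts_of_mem he hve, hv, hvA]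
      · exact hw.adj (hC'.subset he)
          ((Sym2.mem_and_mem_iff (ne_of_mem_of_not_mem hu hvA)).1 ⟨hue, hve⟩)

theorem connected_verts_sdiff (hC : IsTight ends E w C) (hw : IsStrictWeighting ends E w)
    (hC' : IsTight ends E w C') (hne : C' ≠ C) (he : e ∈ C) (he' : e ∈ C') :
    IsConnectedOn (underlying ends E) (verts ends C' \ verts ends C) := by
  refine isConnectedOn_iff.2
    ⟨sdiff_nonempty.2 fun h => hne (hC.eq_of_verts_subset hw hC' h), fun A hA hAne hAC => ?_⟩
  by_contra htouch
  set B := (verts ends C' \ verts ends C) \ A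
  have hBA : (verts ends C' \ verts ends C) \ B = A := Finset.sdiff_sdiff_eq_self hA
  have hA_half := hC.half_le_edgesAt hw hC' hA hAne htouch
  have hB_half := hC.half_le_edgesAt hw hC' (A := B) sdiff_subset
    (sdiff_nonempty.2 fun h => hAC (hA.antisymm h)) fun h => htouch (hBA ▸ h).symm
  have hnotMem : e ∉ edgesAt ends C' A ∪ edgesAt ends C' B := by
    simp only [mem_union, mem_edgesAt]
    have := fun v (hv : v ∈ ends e) => mem_verts_of_mem he hv
    grind
  have hlt := hw.sum_lt_sum (union_subset edgesAt_subset edgesAt_subset) hC'.subset he' hnotMem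
  rw [sum_union (hw.disjoint_edgesAt hC'.subset disjoint_sdiff htouch), hC'.sum_eq_one] at hlt
  linarith

end IsTight

end TightSets

section Contraction

variable {V ι : Type*} {ends : ι → Sym2 V} {E F : Finset ι} {e : ι} {x y : V}

/-- The incidence map of the multigraph obtained by moving all edge ends at `y` to `x`. When `x` and
`y` are the ends of an edge, this contracts that edge (which becomes a loop). -/
noncomputable def contract (ends : ι → Sym2 V) (x y : V) (e : ι) : Sym2 V :=
  (ends e).map (Function.update id y x)

theorem ne_of_mem_contract {v : V} (hxy : x ≠ y) (hv : v ∈ contract ends x y e) : v ≠ y := by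
  obtain ⟨u, -, rfl⟩ := Sym2.mem_map.1 hv
  by_cases hu : u = y <;> simp [hu, hxy]

theorem eq_or_mem_of_mem_contract {v : V} (hv : v ∈ contract ends x y e) : v = x ∨ v ∈ ends e := by
  obtain ⟨u, hu, rfl⟩ := Sym2.mem_map.1 hv
  by_cases huy : u = y <;> simp [huy, hu]

theorem edgeBoundary_contract (ends : ι → Sym2 V) (x y : V) (e : ι) :
    edgeBoundary (contract ends x y e) =
      edgeBoundary (ends e) + edgeBoundary (ends e) y • edgeBoundary s(x, y) := by
  have single_update (v : V) : (Pi.single (Function.update id y x v) 1 : V → ZMod 2) =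
      Pi.single v 1 + (Pi.single v 1 : V → ZMod 2) y • edgeBoundary s(x, y) := by
    by_cases hv : v = y
    · subst hv
      simp only [Function.update_self, edgeBoundary_mk, Pi.single_eq_same, one_smul]
      rw [add_left_comm, ZModModule.add_self, add_zero]
    · simp [hv, Ne.symm hv]
  rw [contract]
  induction ends e with | _ u v
  rw [Sym2.map_mk, edgeBoundary_mk, single_update, single_update, edgeBoundary_mk u v, Pi.add_apply,
    add_smul, add_add_add_comm]

theorem boundary_contract (F : Finset ι) (x y : V) : boundary (contract ends x y) F =
    boundary ends F + boundary ends F y • edgeBoundary s(x, y) := by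
  simp only [boundary, edgeBoundary_contract, sum_add_distrib, Finset.sum_apply, sum_smul]

theorem boundary_erase_contract (he : ends e = s(x, y)) (hF : boundary ends F = 0) :
    boundary (contract ends x y) (F.erase e) = 0 := by
  have hdiag : (contract ends x y e).IsDiag := by
    simp only [contract, he, Sym2.map_mk, Sym2.mk_isDiag_iff, Function.update_apply]
    split_ifs <;> rfl
  have hsum := sum_erase F (f := fun f => edgeBoundary (contract ends x y f)) (a := e)
    (edgeBoundary_of_isDiag hdiag)
  rw [boundary, hsum, ← boundary, boundary_contract, hF, Pi.zero_apply, zero_smul, add_zero]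

theorem boundary_eq_zero_or_of_contract (he : ends e = s(x, y)) (heF : e ∉ F)
    (hF : boundary (contract ends x y) F = 0) :
    boundary ends F = 0 ∨ boundary ends (insert e F) = 0 := by
  rw [boundary_contract] at hF
  have hy : boundary ends F y = 0 ∨ boundary ends F y = 1 := Fin.exists_fin_two.1 ⟨_, rfl⟩
  rcases hy with hy | hy <;> rw [hy] at hF
  · exact .inl (by simpa using hF)
  · rw [one_smul, add_comm, ← he] at hF
    exact .inr ((sum_insert heF).trans hF)

theorem isPlanar_contract (he : e ∈ E) (hxy : ends e = s(x, y))
    (h : (underlying ends E).IsPlanar) : (underlying (contract ends x y) E).IsPlanar := by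
  refine isPlanar_of_contraction (c := Function.update id y x) ?_ ?_ h
  · rintro v ⟨p, hp⟩ ⟨q, hq⟩
    rw [Set.mem_preimage, Set.mem_singleton_iff] at hp hq
    by_cases hpq : p = q
    · subst hpq; rfl
    refine Adj.reachable (induce_adj.2 (underlying_adj.2 ⟨⟨e, he, ?_⟩, hpq⟩))
    rw [hxy, ← Sym2.mem_and_mem_iff hpq]
    by_cases hpy : p = y <;> by_cases hqy : q = y <;> simp_all
  · intro p q hpq
    obtain ⟨⟨f, hf, hfpq⟩, hne⟩ := underlying_adj.1 hpq
    rw [contract] at hfpq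
    induction hends : ends f with | _ p' q'
    rw [hends, Sym2.map_mk, Sym2.eq_iff] at hfpq
    have hne' : p' ≠ q' := by rintro rfl; grind
    have hadj : (underlying ends E).Adj p' q' := underlying_adj.2 ⟨⟨f, hf, hends⟩, hne'⟩
    rcases hfpq with ⟨hp, hq⟩ | ⟨hp, hq⟩
    · exact ⟨p', q', hp, hq, hadj⟩
    · exact ⟨q', p', hq, hp, hadj.symm⟩

end Contraction

theorem exists_pos_forall_nonneg_exists_eq_zero {κ K : Type*} [Field K] [LinearOrder K]
    [IsStrictOrderedRing K] {T : Finset κ} {a b : κ → K} (ha : ∀ i ∈ T, 0 ≤ a i)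
    (hab : ∀ i ∈ T, b i < 0 → 0 < a i) (hb : ∃ i ∈ T, b i < 0) :
    ∃ t > 0, (∀ i ∈ T, 0 ≤ a i + t * b i) ∧ ∃ i ∈ T, b i < 0 ∧ a i + t * b i = 0 := by
  obtain ⟨j, hj⟩ := hb
  obtain ⟨i, hi, hmin⟩ := exists_min_image {i ∈ T | b i < 0} (fun i => a i / -b i)
    ⟨j, mem_filter.2 hj⟩
  obtain ⟨hiT, hbi⟩ := mem_filter.1 hi
  have ht : 0 < a i / -b i := div_pos (hab i hiT hbi) (neg_pos.2 hbi)
  refine ⟨a i / -b i, ht, fun k hk => ?_, i, hiT, hbi, ?_⟩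
  · rcases lt_or_ge (b k) 0 with hbk | hbk
    · have hik := (le_div_iff₀ (neg_pos.2 hbk)).1 (hmin k (mem_filter.2 ⟨hk, hbk⟩))
      linarith
    · exact add_nonneg (ha k hk) (mul_nonneg ht.le hbk)
  · field_simp [hbi.ne]
    ring

section GirthWeighting

variable {V ι : Type*} {ends : ι → Sym2 V} {C E E' F : Finset ι} {A S S' : Finset V} {e : ι}
  {x y : V} {w : ι → ℝ}

/-- The finset of tight subsets of `E`. -/
noncomputable def tightSets (ends : ι → Sym2 V) (E : Finset ι) (w : ι → ℝ) : Finset (Finset ι) :=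
  {C ∈ E.powerset | IsTight ends E w C}

theorem mem_tightSets : C ∈ tightSets ends E w ↔ IsTight ends E w C := by
  simpa [tightSets] using IsTight.subset

/-- A nonnegative weighting of a planar multigraph with vertex set `S` and edge set `E`, not a
forest, for which every nonempty even set of edges has weight at least one. This is the hypothesis
of the weighted Euler inequality `#E + 2 ≤ #S + 2 * ∑ e ∈ E, w e`. -/
structure IsGirthWeighting (ends : ι → Sym2 V) (S : Finset V) (E : Finset ι) (w : ι → ℝ) :
    Prop where
  mem : ∀ e ∈ E, ∀ v ∈ ends e, v ∈ S
  nonneg : ∀ e ∈ E, 0 ≤ w e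
  one_le : ∀ F ⊆ E, F.Nonempty → boundary ends F = 0 → 1 ≤ ∑ e ∈ F, w e
  exists_even : ∃ F ⊆ E, F.Nonempty ∧ boundary ends F = 0
  isPlanar : (underlying ends E).IsPlanar

/-- A counterexample to the weighted Euler inequality, all smaller multigraphs satisfying it. -/
structure IsMinimalCounterexample (ends : ι → Sym2 V) (S : Finset V) (E : Finset ι) (w : ι → ℝ) :
    Prop extends IsGirthWeighting ends S E w where
  lt : #S + 2 * ∑ e ∈ E, w e < #E + 2
  le_of_card_lt : ∀ (ends' : ι → Sym2 V) (S' : Finset V) (E' : Finset ι) (w' : ι → ℝ),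
    #S' + #E' < #S + #E → IsGirthWeighting ends' S' E' w' → #E' + 2 ≤ #S' + 2 * ∑ e ∈ E', w' e

namespace IsGirthWeighting

theorem anti (h : IsGirthWeighting ends S E w) (hE' : E' ⊆ E)
    (hmem : ∀ e ∈ E', ∀ v ∈ ends e, v ∈ S')
    (heven : ∃ F ⊆ E', F.Nonempty ∧ boundary ends F = 0) : IsGirthWeighting ends S' E' w where
  mem := hmem
  nonneg e he := h.nonneg e (hE' he)
  one_le F hF := h.one_le F (hF.trans hE')
  exists_even := heven
  isPlanar := isPlanar_anti (underlying_mono hE') h.isPlanar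

theorem vertices_nonempty (h : IsGirthWeighting ends S E w) : S.Nonempty := by
  obtain ⟨F, hF, ⟨e, he⟩, -⟩ := h.exists_even
  exact ⟨_, h.mem e (hF he) _ (Sym2.out_fst_mem (ends e))⟩

theorem one_le_sum (h : IsGirthWeighting ends S E w) : 1 ≤ ∑ e ∈ E, w e := by
  obtain ⟨F, hF, hne, hF0⟩ := h.exists_even
  exact (h.one_le F hF hne hF0).trans <|
    sum_le_sum_of_subset_of_nonneg hF fun e he _ => h.nonneg e he

theorem not_isDiag (h : IsGirthWeighting ends S E w) (he : e ∈ E) (hwe : w e = 0) :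
    ¬ (ends e).IsDiag := by
  intro hdiag
  have hone := h.one_le {e} (singleton_subset_iff.2 he) (singleton_nonempty e)
    (by rw [boundary, sum_singleton, edgeBoundary_of_isDiag hdiag])
  norm_num [hwe] at hone

theorem contract (h : IsGirthWeighting ends S E w) (he : e ∈ E) (hwe : w e = 0)
    (hxy : ends e = s(x, y)) :
    IsGirthWeighting (contract ends x y) (S.erase y) (E.erase e) w where
  mem f hf v hv := by
    have hne : x ≠ y := by simpa [hxy] using h.not_isDiag he hwe
    refine mem_erase.2 ⟨ne_of_mem_contract hne hv, ?_⟩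
    rcases eq_or_mem_of_mem_contract hv with rfl | hv
    · exact h.mem e he v (hxy ▸ Sym2.mem_mk_left v y)
    · exact h.mem f (mem_of_mem_erase hf) v hv
  nonneg f hf := h.nonneg f (mem_of_mem_erase hf)
  one_le F hF hne hF0 := by
    have hFE := hF.trans (erase_subset e E)
    have heF : e ∉ F := fun heF => notMem_erase e E (hF heF)
    rcases boundary_eq_zero_or_of_contract hxy heF hF0 with h0 | h0
    · exact h.one_le F hFE hne h0
    · have hone := h.one_le _ (insert_subset he hFE) (insert_nonempty e F) h0
      rwa [sum_insert heF, hwe, zero_add] at hone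
  exists_even := by
    obtain ⟨F, hF, hne, hF0⟩ := h.exists_even
    refine ⟨F.erase e, erase_subset_erase e hF, ?_, boundary_erase_contract hxy hF0⟩
    by_contra! hempty
    have hone := h.one_le F hF hne hF0
    rw [← sum_erase F hwe, hempty, sum_empty] at hone
    exact one_pos.not_ge hone
  isPlanar :=
    isPlanar_anti (underlying_mono (erase_subset e E)) (isPlanar_contract he hxy h.isPlanar)

end IsGirthWeighting

namespace IsMinimalCounterexample

theorem lt_half (h : IsMinimalCounterexample ends S E w) (he : e ∈ E) : w e < 1 / 2 := by
  by_contra! hwe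
  have hlt := h.lt
  have hcard := card_erase_add_one he
  by_cases heven : ∃ F ⊆ E.erase e, F.Nonempty ∧ boundary ends F = 0
  · have hle := h.le_of_card_lt ends S (E.erase e) w (by lia) <|
      h.anti (erase_subset e E) (fun f hf => h.mem f (mem_of_mem_erase hf)) heven
    rw [← add_sum_erase E w he, ← hcard] at hlt
    push_cast at hlt
    linarith
  · have hES : #(E.erase e) < #S := by
      by_contra! hSE
      exact heven (exists_nonempty_boundary_eq_zero
        (fun f hf => h.mem f (mem_of_mem_erase hf)) h.vertices_nonempty hSE)
    have hES' : (#E : ℝ) ≤ #S := by exact_mod_cast (by lia : #E ≤ #S)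
    linarith [h.one_le_sum]

theorem pos (h : IsMinimalCounterexample ends S E w) (he : e ∈ E) : 0 < w e := by
  refine (h.nonneg e he).lt_of_ne' fun hwe => ?_
  induction hxy : ends e with | _ x y
  have hE := card_erase_add_one he
  have hS := card_erase_add_one (h.mem e he y (hxy ▸ Sym2.mem_mk_right x y))
  have hle := h.le_of_card_lt _ _ _ w (by lia) (h.contract he hwe hxy)
  have hlt := h.lt
  rw [← add_sum_erase E w he, hwe, ← hE, ← hS] at hlt
  push_cast at hlt
  linarith

theorem isStrictWeighting (h : IsMinimalCounterexample ends S E w) :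
    IsStrictWeighting ends E w :=
  ⟨fun _ => h.pos, fun _ => h.lt_half, h.one_le⟩

theorem verts_subset (h : IsMinimalCounterexample ends S E w) (hC : IsTight ends E w C) :
    verts ends C ⊆ S := fun v hv =>
  let ⟨e, he, hve⟩ := mem_verts.1 hv
  h.mem e (hC.subset he) v hve

theorem card_edgesAt_le (h : IsMinimalCounterexample ends S E w) (hC : IsTight ends E w C)
    (hA : A ⊂ S \ verts ends C)
    (hclosed : ¬ Touches (underlying ends E) A ((S \ verts ends C) \ A)) :
    #(edgesAt ends E A) ≤ #A + 2 * ∑ e ∈ edgesAt ends E A, w e := by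
  have hw := h.isStrictWeighting
  have hPA : Disjoint (verts ends C) A := disjoint_sdiff.mono_right hA.subset
  have hCA : Disjoint C (edgesAt ends E A) := Finset.disjoint_left.2 fun e he heA =>
    let ⟨_, v, hv, hve⟩ := mem_edgesAt.1 heA
    Finset.disjoint_left.1 hPA (mem_verts_of_mem he hve) hv
  have hES : C ∪ edgesAt ends E A ⊆ E := union_subset hC.subset edgesAt_subset
  have hSlt : #(verts ends C ∪ A) < #S := by
    have := card_lt_card hA
    have := card_sdiff_add_card_eq_card (h.verts_subset hC)
    rw [card_union_of_disjoint hPA]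
    lia
  have hmem : ∀ e ∈ C ∪ edgesAt ends E A, ∀ v ∈ ends e, v ∈ verts ends C ∪ A := by
    intro e he v hv
    rw [mem_union] at he ⊢
    by_contra! hvPA
    obtain ⟨heE, u, hu, hue⟩ := mem_edgesAt.1
      (he.resolve_left fun heC => hvPA.1 (mem_verts_of_mem heC hv))
    refine hclosed ⟨u, hu, v, ?_, hw.adj heE
      ((Sym2.mem_and_mem_iff (ne_of_mem_of_not_mem hu hvPA.2)).1 ⟨hue, hv⟩)⟩
    simp [h.mem e heE v hv, hvPA]
  have hle := h.le_of_card_lt ends _ _ w (add_lt_add_of_lt_of_le hSlt (card_le_card hES)) <|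
    h.anti hES hmem ⟨C, subset_union_left, hC.nonempty, hC.boundary_eq_zero⟩
  rw [card_union_of_disjoint hPA, card_union_of_disjoint hCA, sum_union hCA, hC.sum_eq_one,
    hC.card_verts hw] at hle
  push_cast at hle
  linarith

theorem edgesAt_sdiff_verts (h : IsMinimalCounterexample ends S E w) (hC : IsTight ends E w C) :
    edgesAt ends E (S \ verts ends C) = E \ C := by
  ext e
  rw [mem_edgesAt, mem_sdiff, and_congr_right_iff]
  refine fun he => ⟨fun ⟨v, hv, hve⟩ heC => (mem_sdiff.1 hv).2 (mem_verts_of_mem heC hve),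
    fun heC => ?_⟩
  by_contra! hall
  refine heC (hC.mem_of_ends_subset h.isStrictWeighting he fun v hve => ?_)
  by_contra hv
  exact hall v (mem_sdiff.2 ⟨h.mem e he v hve, hv⟩) hve

theorem card_sdiff_verts_lt (h : IsMinimalCounterexample ends S E w) (hC : IsTight ends E w C) :
    #(S \ verts ends C) + 2 * ∑ e ∈ E \ C, w e < #(E \ C) := by
  have hlt := h.lt
  rw [← card_sdiff_add_card_eq_card (h.verts_subset hC), hC.card_verts h.isStrictWeighting,
    ← card_sdiff_add_card_eq_card hC.subset, ← sum_sdiff hC.subset, hC.sum_eq_one] at hlt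
  push_cast at hlt
  linarith

theorem connected_sdiff_verts (h : IsMinimalCounterexample ends S E w)
    (hC : IsTight ends E w C) : IsConnectedOn (underlying ends E) (S \ verts ends C) := by
  have hlt := h.card_sdiff_verts_lt hC
  have hedges := h.edgesAt_sdiff_verts hC
  refine isConnectedOn_iff.2 ⟨?_, fun A hA hne hAne => ?_⟩
  · by_contra! hempty
    simp [← hedges, hempty, edgesAt] at hlt
  by_contra htouch
  set B := (S \ verts ends C) \ A
  have hBA : (S \ verts ends C) \ B = A := Finset.sdiff_sdiff_eq_self hA
  have hA_le := h.card_edgesAt_le hC (hA.ssubset_of_ne hAne) htouch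
  have hB_le := h.card_edgesAt_le hC (A := B) (sdiff_ssubset hA hne) fun hB =>
    htouch (hBA ▸ hB).symm
  have hAB : Disjoint (edgesAt ends E A) (edgesAt ends E B) :=
    h.isStrictWeighting.disjoint_edgesAt subset_rfl disjoint_sdiff htouch
  rw [← hedges, ← union_sdiff_of_subset hA, edgesAt_union, card_union_of_disjoint disjoint_sdiff,
    card_union_of_disjoint hAB, sum_union hAB] at hlt
  push_cast at hlt
  linarith

theorem isPeripheralCycle (h : IsMinimalCounterexample ends S E w) (hC : IsTight ends E w C) :
    IsPeripheralCycle (underlying ends E) S (verts ends C) where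
  toIsCycleOn := hC.isCycleOn h.isStrictWeighting
  subset := h.verts_subset hC
  connected_sdiff := h.connected_sdiff_verts hC

theorem card_filter_tightSets_le_two (h : IsMinimalCounterexample ends S E w) (he : e ∈ E) :
    #{C ∈ tightSets ends E w | e ∈ C} ≤ 2 := by
  by_contra! hcard
  have hw := h.isStrictWeighting
  obtain ⟨f⟩ : Nonempty (Fin 3 ↪ {C ∈ tightSets ends E w | e ∈ C}) :=
    Function.Embedding.nonempty_of_card_le (by simpa [Nat.succ_le_iff] using hcard)
  have hf (i : Fin 3) : IsTight ends E w (f i) ∧ e ∈ (f i : Finset ι) :=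
    let hi := mem_filter.1 (f i).2
    ⟨mem_tightSets.1 hi.1, hi.2⟩
  induction hxy : ends e with | _ x y
  have hx : x ∈ ends e := hxy ▸ Sym2.mem_mk_left x y
  have hy : y ∈ ends e := hxy ▸ Sym2.mem_mk_right x y
  refine not_isPlanar_of_isPeripheralCycle (D := fun i => verts ends (f i))
    (fun i => h.isPeripheralCycle (hf i).1) (fun i j hij => ?_)
    (fun i => mem_verts_of_mem (hf i).2 hx) (fun i => mem_verts_of_mem (hf i).2 hy)
    (hw.adj he hxy) h.isPlanar
  exact (hf j).1.connected_verts_sdiff hw (hf i).1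
    (fun hij' => hij (f.injective (Subtype.ext hij'))) (hf j).2 (hf i).2

theorem card_tightSets_lt (h : IsMinimalCounterexample ends S E w) :
    #(tightSets ends E w) < #E := by
  have hle : #(tightSets ends E w) * 3 ≤ #E * 2 := by
    refine card_mul_le_card_mul (fun C e => e ∈ C) (fun C hC => ?_) fun e he =>
      h.card_filter_tightSets_le_two he
    rw [mem_tightSets] at hC
    rw [bipartiteAbove, filter_mem_eq_inter, inter_eq_right.2 hC.subset]
    exact hC.three_le_card h.isStrictWeighting
  obtain ⟨F, hF, hne, -⟩ := h.exists_even
  have hpos := card_pos.2 (hne.mono hF)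
  lia

theorem exists_direction (h : IsMinimalCounterexample ends S E w) :
    ∃ z : ι → ℝ, (∃ e ∈ E, z e < 0) ∧ ∑ e ∈ E, z e ≤ 0 ∧
      ∀ C ∈ tightSets ends E w, ∑ e ∈ C, z e = 0 := by
  obtain ⟨J, ⟨e, he, hJe⟩, hJ⟩ := exists_ne_zero_forall_sum_mul_eq_zero
    (fun e C => if e ∈ C then (1 : ℝ) else 0) h.card_tightSets_lt
  have hJ0 : ∀ C ∈ tightSets ends E w, ∑ e ∈ C, J e = 0 := by
    intro C hC
    have hCE := inter_eq_right.2 (mem_tightSets.1 hC).subset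
    simpa [sum_ite_mem, hCE] using hJ C hC
  have exists_neg {z : ι → ℝ} (hz : z e ≠ 0) (hsum : ∑ e ∈ E, z e ≤ 0) : ∃ e ∈ E, z e < 0 := by
    by_contra! hnn
    exact hz ((sum_eq_zero_iff_of_nonneg hnn).1 (hsum.antisymm (sum_nonneg hnn)) e he)
  rcases le_total (∑ e ∈ E, J e) 0 with hsum | hsum
  · exact ⟨J, exists_neg hJe hsum, hsum, hJ0⟩
  · have hsum' : ∑ e ∈ E, (-J) e ≤ 0 := by simpa using hsum
    exact ⟨-J, exists_neg (neg_ne_zero.2 hJe) hsum', hsum', fun C hC => by simpa using hJ0 C hC⟩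

theorem add_smul {z : ι → ℝ} {t : ℝ} (h : IsMinimalCounterexample ends S E w) (ht : 0 ≤ t)
    (hz : ∑ e ∈ E, z e ≤ 0) (hnonneg : ∀ e ∈ E, 0 ≤ w e + t * z e)
    (hone : ∀ F ⊆ E, F.Nonempty → boundary ends F = 0 → 1 ≤ ∑ e ∈ F, w e + t * ∑ e ∈ F, z e) :
    IsMinimalCounterexample ends S E (w + t • z) where
  mem := h.mem
  nonneg := hnonneg
  one_le F hF hne hF0 := by simpa [sum_add_distrib, mul_sum] using hone F hF hne hF0
  exists_even := h.exists_even
  isPlanar := h.isPlanar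
  lt := by
    have hlt := h.lt
    have htz := mul_nonpos_of_nonneg_of_nonpos ht hz
    simp only [Pi.add_apply, Pi.smul_apply, smul_eq_mul, sum_add_distrib, ← mul_sum]
    linarith
  le_of_card_lt := h.le_of_card_lt

-- Take for `t` the first time at which a weight vanishes or an even set becomes tight along the
-- direction `z`; it is the latter, the weights of a minimal counterexample being positive.
theorem exists_isTight_add_smul {z : ι → ℝ} (h : IsMinimalCounterexample ends S E w)
    (hneg : ∃ e ∈ E, z e < 0) (hz : ∑ e ∈ E, z e ≤ 0)
    (htight : ∀ C ∈ tightSets ends E w, ∑ e ∈ C, z e = 0) :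
    ∃ t : ℝ, IsMinimalCounterexample ends S E (w + t • z) ∧ ∃ C, IsTight ends E (w + t • z) C ∧
      ∑ e ∈ C, z e < 0 := by
  let evenSets : Finset (Finset ι) := {F ∈ E.powerset | F.Nonempty ∧ boundary ends F = 0}
  have mem_evenSets {F : Finset ι} :
      F ∈ evenSets ↔ F ⊆ E ∧ F.Nonempty ∧ boundary ends F = 0 := by simp [evenSets]
  obtain ⟨t, ht, hnonneg, i, hi, hzi, hi0⟩ := exists_pos_forall_nonneg_exists_eq_zero
    (T := E.disjSum evenSets) (a := Sum.elim w fun F => ∑ e ∈ F, w e - 1)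
    (b := Sum.elim z fun F => ∑ e ∈ F, z e) (by
      rintro (e | F) hi
      · exact h.nonneg e (inl_mem_disjSum.1 hi)
      · obtain ⟨hF, hne, hF0⟩ := mem_evenSets.1 (inr_mem_disjSum.1 hi)
        exact sub_nonneg.2 (h.one_le F hF hne hF0)) (by
      rintro (e | F) hi hzi
      · exact h.pos (inl_mem_disjSum.1 hi)
      · obtain ⟨hF, hne, hF0⟩ := mem_evenSets.1 (inr_mem_disjSum.1 hi)
        refine sub_pos.2 ((h.one_le F hF hne hF0).lt_of_ne' fun hF1 => hzi.ne ?_)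
        exact htight F (mem_tightSets.2 ⟨hF, hne, hF0, hF1⟩))
    (let ⟨e, he, hze⟩ := hneg; ⟨.inl e, inl_mem_disjSum.2 he, hze⟩)
  have hw' : IsMinimalCounterexample ends S E (w + t • z) :=
    h.add_smul ht.le hz (fun e he => hnonneg (.inl e) (inl_mem_disjSum.2 he))
      fun F hF hne hF0 => by
        have := hnonneg (.inr F) (inr_mem_disjSum.2 (mem_evenSets.2 ⟨hF, hne, hF0⟩))
        simp only [Sum.elim_inr] at this
        linarith
  refine ⟨t, hw', ?_⟩
  rcases i with e | C
  · exact absurd hi0 (hw'.pos (inl_mem_disjSum.1 hi)).ne'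
  · obtain ⟨hC, hne, hC0⟩ := mem_evenSets.1 (inr_mem_disjSum.1 hi)
    refine ⟨C, ⟨hC, hne, hC0, ?_⟩, hzi⟩
    simp only [Sum.elim_inr] at hi0
    simp only [Pi.add_apply, Pi.smul_apply, smul_eq_mul, sum_add_distrib, ← mul_sum]
    linarith

theorem exists_tightSets_ssubset (h : IsMinimalCounterexample ends S E w) :
    ∃ w', IsMinimalCounterexample ends S E w' ∧ tightSets ends E w ⊂ tightSets ends E w' := by
  obtain ⟨z, hneg, hzE, hz⟩ := h.exists_direction
  obtain ⟨t, hw', C, hC, hzC⟩ := h.exists_isTight_add_smul hneg hzE hz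
  refine ⟨w + t • z, hw', fun F hF => ?_, fun hss => hzC.ne (hz C (hss (mem_tightSets.2 hC)))⟩
  obtain ⟨hFE, hne, hF0, hF1⟩ := mem_tightSets.1 hF
  exact mem_tightSets.2 ⟨hFE, hne, hF0, by simp [sum_add_distrib, ← mul_sum, hz F hF, hF1]⟩

theorem elim (h : IsMinimalCounterexample ends S E w) : False := by
  induction hn : #E - #(tightSets ends E w) using Nat.strong_induction_on generalizing w
    with | _ n ih
  obtain ⟨w', hw', hss⟩ := h.exists_tightSets_ssubset
  have hcard := card_lt_card hss
  exact ih _ (hn ▸ Nat.sub_lt_sub_left h.card_tightSets_lt hcard) hw' rfl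

end IsMinimalCounterexample

theorem IsGirthWeighting.card_add_two_le (h : IsGirthWeighting ends S E w) :
    #E + 2 ≤ #S + 2 * ∑ e ∈ E, w e := by
  induction hn : #S + #E using Nat.strong_induction_on generalizing ends S E w with | _ n ih
  by_contra! hlt
  exact IsMinimalCounterexample.elim
    ⟨h, hlt, fun ends' S' E' w' hcard h' => ih _ (hn ▸ hcard) h' rfl⟩

end GirthWeighting

section Girth

variable {V : Type*} {G : SimpleGraph V}

-- If `e ∈ F` is a bridge, then the boundary of `F`, summed over the component of `F \ {e}`
-- containing one end of `e`, is one.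
theorem not_isAcyclic_of_boundary_eq_zero {F : Finset (Sym2 V)} (hF : ∀ e ∈ F, ¬ e.IsDiag)
    (hne : F.Nonempty) (hF0 : boundary id F = 0) :
    ¬ (fromEdgeSet (F : Set (Sym2 V))).IsAcyclic := by
  intro hac
  obtain ⟨e, he⟩ := hne
  induction e with | _ u v
  have huv : ¬ ((fromEdgeSet (F : Set (Sym2 V))).deleteEdges {s(u, v)}).Reachable u v :=
    isBridge_iff.1 (isAcyclic_iff_forall_isBridge.1 hac (by simpa using ⟨he, hF _ he⟩))
  set H := (fromEdgeSet (F : Set (Sym2 V))).deleteEdges {s(u, v)}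
  set A : Finset V := {x ∈ verts id F | H.Reachable u x}
  have hu : u ∈ A := mem_filter.2 ⟨mem_verts_of_mem he (Sym2.mem_mk_left u v), .refl u⟩
  have hv : v ∉ A := fun hv => huv (mem_filter.1 hv).2
  have hother : ∀ e ∈ F.erase s(u, v), ∑ x ∈ A, edgeBoundary e x = 0 := by
    intro e he'
    obtain ⟨hne, heF⟩ := mem_erase.1 he'
    refine sum_edgeBoundary_of_forall_mem fun a ha b hb haA => ?_
    rcases eq_or_ne a b with rfl | hab
    · exact haA
    obtain rfl := (Sym2.mem_and_mem_iff hab).1 ⟨ha, hb⟩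
    have hadj : H.Adj a b := deleteEdges_adj.2 ⟨(fromEdgeSet_adj _).2 ⟨heF, hab⟩, hne⟩
    exact mem_filter.2 ⟨mem_verts_of_mem heF hb, (mem_filter.1 haA).2.trans hadj.reachable⟩
  have hsum : ∑ x ∈ A, boundary id F x = 1 := by
    simp only [boundary_apply, id]
    rw [sum_comm, ← add_sum_erase F _ he, sum_eq_zero hother]
    simp [edgeBoundary_mk, sum_add_distrib, hu, hv]
  simp [hF0] at hsum

theorem girth_le_card_of_boundary_eq_zero {F : Finset (Sym2 V)} (hF : ∀ e ∈ F, e ∈ G.edgeSet)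
    (hne : F.Nonempty) (hF0 : boundary id F = 0) : G.girth ≤ #F := by
  have hac := not_isAcyclic_of_boundary_eq_zero (fun e he => G.not_isDiag_of_mem_edgeSet (hF e he))
    hne hF0
  have hle : fromEdgeSet (F : Set (Sym2 V)) ≤ G := fun u v huv => hF _ huv.1
  obtain ⟨u, p, hp, hlen⟩ := exists_girth_eq_length.2 hac
  refine (girth_anti hle hac).trans ?_
  rw [hlen, ← p.length_edges, ← List.toFinset_card_of_nodup hp.edges_nodup]
  refine card_le_card fun e he => ?_
  have he' := p.edges_subset_edgeSet (List.mem_toFinset.1 he)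
  rw [edgeSet_fromEdgeSet] at he'
  exact he'.1

theorem not_isAcyclic_of_card_le_card_edgeFinset [Fintype V] [Nonempty V]
    (h : Fintype.card V ≤ #G.edgeFinset) : ¬ G.IsAcyclic := by
  obtain ⟨F, hF, hne, hF0⟩ := exists_nonempty_boundary_eq_zero (ends := id) (S := univ)
    (E := G.edgeFinset) (by simp) univ_nonempty h
  have hF' : ∀ e ∈ F, e ∈ G.edgeSet := fun e he => mem_edgeFinset.1 (hF he)
  exact fun hac => not_isAcyclic_of_boundary_eq_zero
    (fun e he => G.not_isDiag_of_mem_edgeSet (hF' e he)) hne hF0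
    (hac.anti fun u v huv => hF' _ huv.1)

theorem girth_mul_card_edgeFinset_add_two_le [Fintype V] [Nonempty V] (hG : G.IsPlanar)
    (hcard : Fintype.card V ≤ #G.edgeFinset) :
    G.girth * (#G.edgeFinset + 2) ≤ G.girth * Fintype.card V + 2 * #G.edgeFinset := by
  have hgirth : (0 : ℝ) < G.girth := by
    have := three_le_girth (not_isAcyclic_of_card_le_card_edgeFinset hcard)
    exact_mod_cast (by lia : 0 < G.girth)
  have hw : IsGirthWeighting id univ G.edgeFinset fun _ => 1 / (G.girth : ℝ) :=
    { mem := by simp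
      nonneg := fun _ _ => by positivity
      one_le := fun F hF hne hF0 => by
        have hle : (G.girth : ℝ) ≤ #F := mod_cast
          girth_le_card_of_boundary_eq_zero (fun e he => mem_edgeFinset.1 (hF he)) hne hF0
        rwa [sum_const, nsmul_eq_mul, mul_one_div, le_div_iff₀ hgirth, one_mul]
      exists_even := exists_nonempty_boundary_eq_zero (by simp) univ_nonempty hcard
      isPlanar := by simpa [underlying] using hG }
  have hle := hw.card_add_two_le
  rw [sum_const, nsmul_eq_mul, mul_one_div, card_univ] at hle
  have hle' := mul_le_mul_of_nonneg_left hle hgirth.le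
  rw [mul_add (G.girth : ℝ) (Fintype.card V : ℝ), mul_left_comm (G.girth : ℝ) 2,
    mul_div_cancel₀ _ hgirth.ne'] at hle'
  exact_mod_cast hle'

theorem mul_card_le_two_mul_card_edgeFinset [Fintype V] {r : ℕ} (h : ∀ v, r ≤ G.degN v) :
    r * Fintype.card V ≤ 2 * #G.edgeFinset := by
  rw [← G.sum_degrees_eq_twice_card_edges, mul_comm, ← smul_eq_mul, ← card_univ]
  refine card_nsmul_le_sum _ _ _ fun v _ => ?_
  have := h v
  rwa [SimpleGraph.degN, Set.ncard_eq_toFinset_card'] at this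

theorem three_le_girth_and_mul_girth_lt [Finite V] [Nonempty V] (hG : G.IsPlanar) {r : ℕ}
    (hr : 2 ≤ r) (hdeg : ∀ v, r ≤ G.degN v) :
    3 ≤ G.girth ∧ r * G.girth < 2 * (r + G.girth) := by
  have := Fintype.ofFinite V
  have hrV := mul_card_le_two_mul_card_edgeFinset hdeg
  have hcard : Fintype.card V ≤ #G.edgeFinset := by
    have := Nat.mul_le_mul_right (Fintype.card V) hr
    lia
  have hgirth := three_le_girth (not_isAcyclic_of_card_le_card_edgeFinset hcard)
  refine ⟨hgirth, ?_⟩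
  have hlt : r * G.girth * #G.edgeFinset < 2 * (r + G.girth) * #G.edgeFinset := calc
    _ < r * (G.girth * (#G.edgeFinset + 2)) := by
      have : 0 < r * G.girth := by positivity
      linarith
    _ ≤ r * (G.girth * Fintype.card V + 2 * #G.edgeFinset) :=
      Nat.mul_le_mul_left r (girth_mul_card_edgeFinset_add_two_le hG hcard)
    _ = G.girth * (r * Fintype.card V) + 2 * r * #G.edgeFinset := by ring
    _ ≤ G.girth * (2 * #G.edgeFinset) + 2 * r * #G.edgeFinset := by gcongr
    _ = 2 * (r + G.girth) * #G.edgeFinset := by ring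
  exact lt_of_mul_lt_mul_right hlt (Nat.zero_le _)

end Girth

end PlanarGirth

theorem planar_bigirth_triplets_general {V : Type*} [Finite V] [Nonempty V] {G : SimpleGraph V}
    (hG : G.IsPlanar) {r : ℕ} (hr : 2 ≤ r) (hdeg : ∀ v, r ≤ G.degN v) :
    0 < (r : ℤ) * (2 - G.girth) + 2 * G.girth ∧
      ((G.girth = 3 ∧ 2 ≤ r ∧ r ≤ 5) ∨ (G.girth = 4 ∧ 2 ≤ r ∧ r ≤ 3) ∨
        (G.girth = 5 ∧ 2 ≤ r ∧ r ≤ 3) ∨ (6 ≤ G.girth ∧ r = 2)) := by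
  obtain ⟨hg, hlt⟩ := PlanarGirth.three_le_girth_and_mul_girth_lt hG hr hdeg
  generalize G.girth = g at *
  have hlt' : (r : ℤ) * g < 2 * (r + g) := mod_cast hlt
  have hr_eq : 6 ≤ g → r = 2 := fun hg6 => by nlinarith
  refine ⟨by linarith, ?_⟩
  obtain rfl | rfl | rfl | hg6 : g = 3 ∨ g = 4 ∨ g = 5 ∨ 6 ≤ g := by lia
  all_goals lia

/-- If there exists a finite planar `({r,m};g)`-graph (with
`2 ≤ r < m`, `g ≥ 3`), then `r(2−g) + 2g > 0`; equivalently one of: `g = 3` and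
`2 ≤ r ≤ 5`; `g = 4` and `2 ≤ r ≤ 3`; `g = 5` and `2 ≤ r ≤ 3`; or `g ≥ 6` and `r = 2`. -/
theorem planar_bigirth_triplets (r m g : ℕ) (hr : 2 ≤ r) (hrm : r < m) (hg : 3 ≤ g)
    (h : ∃ (V : Type) (_ : Fintype V) (G : SimpleGraph V),
      G.IsPlanar ∧ IsBigirthGraph G r m g) :
    0 < (r : ℤ) * (2 - g) + 2 * g ∧
      ((g = 3 ∧ 2 ≤ r ∧ r ≤ 5) ∨ (g = 4 ∧ 2 ≤ r ∧ r ≤ 3) ∨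
        (g = 5 ∧ 2 ≤ r ∧ r ≤ 3) ∨ (6 ≤ g ∧ r = 2)) := by
  obtain ⟨V, _, G, hG, ⟨rfl, hdeg, ⟨v, -⟩, -⟩⟩ := h
  have : Nonempty V := ⟨v⟩
  exact planar_bigirth_triplets_general hG hr fun u => (hdeg u).elim Eq.ge fun hu => hu ▸ hrm.le
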